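/- There exists a universal constant C such that the following holds. Let r ∈ [1, ∞), let (F, ‖·‖) be a finite-dimensional real normed space that embeds isometrically (via a linear isometry) into the sequence space ℓ_r, and let X be a log-concave random vector with values in F. Then for every p ≥ 1, (E‖X‖^p)^{1/p} ≤ C·r·(E‖X‖ + sup{(E|φ(X)|^p)^{1/p} : φ ∈ F*, ‖φ‖_* ≤ 1}). -/

import Mathlib

/-!
Write `T_i` for the coordinates of `F` in `ℓ_r` and let `B` bound the mean norm and the weak moments
`(E|φ(X)|^{4p})^{1/(4p)}`, `‖φ‖ ≤ 1`, of the law `μ` of `X`. The heart of the matter is the tail bound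
`μ(‖x‖ ≥ L) ≤ e^{-p}` for `L > C r B` (`phase1`). Borell's lemma (`borell_tail`) turns it into a
bound on the `p`-th moment, and by the reverse Hölder inequality for log-concave measures
(`LCM.moment_compare`) moments of order `p` and `16 p` of functionals are comparable, so that one may
take `B` of the order of the right-hand side (`moment_le`).

For the tail bound, suppose that `E = {‖x‖ ≥ L}` has mass more than `e^{-p}`. Let `A` be a convex set
nearly maximizing `μ(E ∩ A) / √μ(A)` and let `ν = μ(· | A)`. Then `ν ≤ e^{4p} μ`, and every half-space
`H` satisfies `ν(E ∩ H) ≤ 2 ν(E) √ν(H)` (`exists_extremal`). Since `T_i` has exponential tails under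
the log-concave measure `ν`, it follows that `∫_E |T_i|^r dν ≤ ν(E) (C r ∫ |T_i| dν)^r`
(`restricted_moment`). Summing over `i`,
`L^r ν(E) ≤ ∫_E ‖x‖^r dν ≤ ν(E) (C r)^r ∑ (∫ |T_i| dν)^r`,
which is a contradiction as soon as `∑ (∫ |T_i| dν)^r ≤ (C0 B)^r`. For `μ` in place of `ν` this is
Minkowski's inequality; the point is that it survives a change of log-concave density of size `e^q`,
here with `q = 4p` (`star`).

To prove `star` it suffices to treat the coordinates for which `b_i = ∫ |T_i| dν` is much larger than
`∫ |T_i| dμ`. Functionals `ψ_1, …, ψ_j` of `μ`-mean at most `1` cut the space into the cells where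
their integer parts are prescribed, and by log-concavity effectively only `e^{O(j)}` cells matter
(`cell_sum`, `light_mass`). A cell that is not too light has its barycenter `z` in the ball of radius
`O(B)` (`bary_bound`), hence `∑ |T_i z|^r ≤ O(B)^r`. If `∑ b_i^r` were much larger, some `T_i` would be
small compared to `b_i` at most barycenters, although `|T_i|` is of order `b_i` on average on a fixed
proportion of the mass (`heavy_mass`); on such cells `T_i` must spread, and the slabs of `T_i` of width
a small multiple of `b_i` split them into pieces with at most a `1/K` fraction of the mass each
(`good_of_heavy`, `one_step`). After `⌈q⌉` such steps (`iterate`) a fixed proportion of `ν` lies in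
cells of mass at most `K^{-cq}`, too light for the number of cells when `K` is large (`no_large`).
-/

open MeasureTheory
open scoped Pointwise ENNReal ProbabilityTheory Classical

/-- A measure on a real topological vector space is log-concave if
`μ(λK + (1−λ)L) ≥ μ(K)^λ μ(L)^{1−λ}` for all compact nonempty `K, L` and `λ ∈ [0,1]`. -/
def IsLogConcave {E : Type*} [AddCommGroup E] [Module ℝ E] [TopologicalSpace E]
    [MeasurableSpace E] (μ : Measure E) : Prop :=
  ∀ K L : Set E, K.Nonempty → L.Nonempty → IsCompact K → IsCompact L →
    ∀ l : ℝ, 0 ≤ l → l ≤ 1 →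
      μ K ^ l * μ L ^ (1 - l) ≤ μ (l • K + (1 - l) • L)

namespace LrMoments

/-! ### Log-concave measures: tails and moments -/

/-- Log-concavity tested on measurable sets: `S`, `T` and any measurable `U` containing
`l S + (1 - l) T`, with real-valued masses. Quantifying over `U` avoids the question of
measurability of Minkowski sums, and the property visibly passes to restrictions to convex sets
and to multiples. -/
def LCM {F : Type*} [NormedAddCommGroup F] [NormedSpace ℝ F] [MeasurableSpace F]
    (μ : Measure F) : Prop :=
  ∀ S T U : Set F, MeasurableSet S → MeasurableSet T → MeasurableSet U →
    ∀ l : ℝ, 0 < l → l < 1 → (∀ x ∈ S, ∀ y ∈ T, l • x + (1 - l) • y ∈ U) →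
      μ.real S ^ l * μ.real T ^ (1 - l) ≤ μ.real U

/-- Inner regularity: `S` and `T` are exhausted by compact sets. -/
lemma lcm_of_isLogConcave {F : Type*} [NormedAddCommGroup F] [NormedSpace ℝ F]
    [MeasurableSpace F] [BorelSpace F] [FiniteDimensional ℝ F] (μ : Measure F)
    [IsFiniteMeasure μ] (h : IsLogConcave μ) : LCM μ := by
  intro S T U hS hT hU l hl0 hl1 hST
  have : ProperSpace F := FiniteDimensional.proper ℝ F
  have key : ∀ K ⊆ S, IsCompact K → ∀ L ⊆ T, IsCompact L →
      μ.real K ^ l * μ.real L ^ (1 - l) ≤ μ.real U := by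
    intro K hKS hK L hLT hL
    rcases K.eq_empty_or_nonempty with rfl | hKn
    · simp [Real.zero_rpow hl0.ne']
    rcases L.eq_empty_or_nonempty with rfl | hLn
    · simp [Real.zero_rpow (sub_pos.2 hl1).ne']
    have h1 := h K L hKn hLn hK hL l hl0.le hl1.le
    have h2 : μ (l • K + (1 - l) • L) ≤ μ U := by
      apply measure_mono
      rintro _ ⟨_, ⟨x, hx, rfl⟩, _, ⟨y, hy, rfl⟩, rfl⟩
      exact hST x (hKS hx) y (hLT hy)
    have h3 := ENNReal.toReal_mono (measure_ne_top μ U) (h1.trans h2)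
    rwa [ENNReal.toReal_mul, ← ENNReal.toReal_rpow, ← ENNReal.toReal_rpow] at h3
  have appr : ∀ S : Set F, MeasurableSet S → ∃ K : ℕ → Set F, (∀ n, K n ⊆ S ∧ IsCompact (K n)) ∧
      Filter.Tendsto (fun n => μ.real (K n)) Filter.atTop (nhds (μ.real S)) := by
    intro S hS
    have : ∀ n : ℕ, ∃ K ⊆ S, IsCompact K ∧ μ S < μ K + ENNReal.ofReal (1 / ((n:ℝ) + 1)) := by
      intro n
      exact hS.exists_isCompact_lt_add (measure_ne_top μ S)
        (by simp only [ne_eq, ENNReal.ofReal_eq_zero, not_le]; positivity)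
    choose K hK1 hK2 hK3 using this
    refine ⟨K, fun n => ⟨hK1 n, hK2 n⟩, ?_⟩
    have hlo : ∀ n : ℕ, μ.real S - 1 / ((n:ℝ) + 1) ≤ μ.real (K n) := by
      intro n
      have h4 := ENNReal.toReal_mono (by finiteness) (hK3 n).le
      rw [ENNReal.toReal_add (by finiteness) (by finiteness),
        ENNReal.toReal_ofReal (by positivity)] at h4
      simp only [Measure.real]; linarith
    refine tendsto_of_tendsto_of_tendsto_of_le_of_le ?_ tendsto_const_nhds hlo
      (fun n => measureReal_mono (hK1 n))
    simpa using tendsto_const_nhds.sub (tendsto_one_div_add_atTop_nhds_zero_nat (𝕜 := ℝ))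
  obtain ⟨K, hK, hKl⟩ := appr S hS
  obtain ⟨L, hL, hLl⟩ := appr T hT
  refine le_of_tendsto ((hKl.rpow_const (Or.inr hl0.le)).mul
    (hLl.rpow_const (Or.inr (sub_pos.2 hl1).le))) (Filter.Eventually.of_forall fun n => ?_)
  exact key _ (hK n).1 (hK n).2 _ (hL n).1 (hL n).2

lemma LCM.restrict {F : Type*} [NormedAddCommGroup F] [NormedSpace ℝ F]
    [MeasurableSpace F] {μ : Measure F} (h : LCM μ) {A : Set F} (hA : MeasurableSet A)
    (hc : Convex ℝ A) : LCM (μ.restrict A) := by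
  intro S T U hS hT hU l hl0 hl1 hST
  simp only [measureReal_restrict_apply hS, measureReal_restrict_apply hT,
    measureReal_restrict_apply hU]
  exact h _ _ _ (hS.inter hA) (hT.inter hA) (hU.inter hA) l hl0 hl1
    fun x hx y hy => ⟨hST x hx.1 y hy.1, hc hx.2 hy.2 hl0.le (by linarith) (by ring)⟩

lemma LCM.smul {F : Type*} [NormedAddCommGroup F] [NormedSpace ℝ F]
    [MeasurableSpace F] {μ : Measure F} (h : LCM μ) (c : ℝ≥0∞) : LCM (c • μ) := by
  intro S T U hS hT hU l hl0 hl1 hST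
  simp only [measureReal_ennreal_smul_apply]
  have hc : 0 ≤ c.toReal := ENNReal.toReal_nonneg
  rw [Real.mul_rpow hc measureReal_nonneg, Real.mul_rpow hc measureReal_nonneg]
  have h1 : c.toReal ^ l * c.toReal ^ (1 - l) = c.toReal := by
    rw [← Real.rpow_add_of_nonneg hc hl0.le (by linarith)]; simp
  calc _ = (c.toReal ^ l * c.toReal ^ (1 - l)) * (μ.real S ^ l * μ.real T ^ (1 - l)) := by ring
    _ ≤ _ := by rw [h1]; gcongr; exact h S T U hS hT hU l hl0 hl1 hST

/-- Functions `N` behaving like a seminorm along segments: the common feature of `‖·‖` and of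
`|φ|` which makes Borell's lemma work. -/
structure SemiLike {F : Type*} [NormedAddCommGroup F] [NormedSpace ℝ F] [MeasurableSpace F]
    (N : F → ℝ) : Prop where
  meas : Measurable N
  nonneg : ∀ x, 0 ≤ N x
  seg : ∀ l : ℝ, 0 < l → l < 1 → ∀ x y, l * N x - (1 - l) * N y ≤ N (l • x + (1 - l) • y)

lemma semiLike_clm {F : Type*} [NormedAddCommGroup F] [NormedSpace ℝ F] [MeasurableSpace F]
    [BorelSpace F] (φ : F →L[ℝ] ℝ) : SemiLike fun x => |φ x| where
  meas := φ.continuous.measurable.abs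
  nonneg _ := abs_nonneg _
  seg l h0 h1 x y := by
    have h2 := abs_sub_abs_le_abs_sub (l * φ x) (-((1 - l) * φ y))
    rw [abs_neg, abs_mul, abs_mul, abs_of_pos h0, abs_of_pos (sub_pos.2 h1)] at h2
    simpa using h2

lemma semiLike_norm {F : Type*} [NormedAddCommGroup F] [NormedSpace ℝ F] [MeasurableSpace F]
    [BorelSpace F] : SemiLike fun x : F => ‖x‖ where
  meas := continuous_norm.measurable
  nonneg _ := norm_nonneg _
  seg l h0 h1 x y := by
    have h2 := norm_sub_norm_le (l • x) (-((1 - l) • y))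
    rw [norm_neg, norm_smul, norm_smul, Real.norm_of_nonneg h0.le,
      Real.norm_of_nonneg (sub_pos.2 h1).le, sub_neg_eq_add] at h2
    exact h2

/-- Borell's lemma: a tail of size `e^{-4a}` at level `t` decays like `e^{-as}` at level `st`. A
suitable convex combination of a point with `N ≥ st` and a point with `N < t` has `N ≥ t`. -/
lemma borell_tail {F : Type*} [NormedAddCommGroup F] [NormedSpace ℝ F]
    [MeasurableSpace F] {ν : Measure F} [IsProbabilityMeasure ν] (h : LCM ν) {N : F → ℝ}
    (hN : SemiLike N) {t a : ℝ} (ha : 1 ≤ a)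
    (ht : ν.real {x | t ≤ N x} ≤ Real.exp (-(4 * a))) {s : ℝ} (hs : 1 ≤ s) :
    ν.real {x | s * t ≤ N x} ≤ Real.exp (-(a * s)) := by
  rcases hs.eq_or_lt with rfl | hs
  · rw [one_mul, mul_one]
    exact ht.trans (Real.exp_le_exp.2 (by linarith))
  have hme : ∀ u : ℝ, MeasurableSet {x | u ≤ N x} := fun u => measurableSet_le measurable_const hN.meas
  set l : ℝ := 2 / (s + 1) with hl
  have hl0 : 0 < l := by positivity
  have hl1 : l < 1 := by rw [hl, div_lt_one (by linarith)]; linarith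
  have hls : l * (s + 1) = 2 := by rw [hl]; field_simp
  have e4 : Real.exp (-(4 * a)) ≤ 1 / 2 := by
    have : Real.exp (-(4*a)) ≤ Real.exp (-1) := Real.exp_le_exp.2 (by linarith)
    have h2 := Real.exp_one_gt_d9
    rw [Real.exp_neg 1] at this
    have h3 : (Real.exp 1)⁻¹ ≤ 2⁻¹ := by gcongr; linarith
    norm_num at h3; linarith
  have hT : 1 / 2 ≤ ν.real {x | t ≤ N x}ᶜ := by
    rw [probReal_compl_eq_one_sub (hme t)]; linarith
  have h1 := h {x | s * t ≤ N x} {x | t ≤ N x}ᶜ {x | t ≤ N x} (hme _) (hme t).compl (hme t) l hl0 hl1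
    (by
      intro x hx y hy
      simp only [Set.mem_ofPred_eq, Set.mem_compl_iff, not_le] at *
      refine le_trans ?_ (hN.seg l hl0 hl1 x y)
      have : l * (s * t) ≤ l * N x := by gcongr
      have : (1 - l) * N y ≤ (1 - l) * t := mul_le_mul_of_nonneg_left hy.le (by linarith)
      have : t * (l * (s + 1)) = t * 2 := by rw [hls]
      linarith)
  set σ := ν.real {x | s * t ≤ N x}
  have h2 : (1/2:ℝ) ≤ (ν.real {x | t ≤ N x}ᶜ) ^ (1 - l) := by
    calc (1/2:ℝ) = (1/2:ℝ) ^ (1:ℝ) := by simp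
      _ ≤ (1/2:ℝ) ^ (1 - l) := Real.rpow_le_rpow_of_exponent_ge (by norm_num) (by norm_num) (by linarith)
      _ ≤ _ := Real.rpow_le_rpow (by norm_num) hT (by linarith)
  have hσ : 0 ≤ σ := measureReal_nonneg
  have h3 : σ ^ l ≤ Real.exp (-(3 * a)) := by
    have h4 : σ ^ l * (1/2) ≤ Real.exp (-(4 * a)) := by
      calc _ ≤ σ ^ l * _ := mul_le_mul_of_nonneg_left h2 (by positivity)
        _ ≤ _ := h1.trans ht
    have h5 : (2:ℝ) ≤ Real.exp a := by
      have := Real.add_one_le_exp a; linarith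
    have h6 : Real.exp (-(3 * a)) = Real.exp a * Real.exp (-(4 * a)) := by
      rw [← Real.exp_add]; ring_nf
    rw [h6]
    nlinarith [Real.exp_pos (-(4*a))]
  have h7 : σ = (σ ^ l) ^ (1 / l) := by
    rw [← Real.rpow_mul hσ, mul_one_div_cancel hl0.ne', Real.rpow_one]
  rw [h7]
  calc _ ≤ (Real.exp (-(3 * a))) ^ (1 / l) := Real.rpow_le_rpow (by positivity) h3 (by positivity)
    _ = Real.exp (-(3 * a) * (1 / l)) := (Real.exp_mul _ _).symm
    _ ≤ _ := by
      apply Real.exp_le_exp.2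
      have : 1 / l = (s + 1) / 2 := by rw [hl]; field_simp
      rw [this]; nlinarith

lemma sum_pow_exp (a s : ℝ) (ha : 1 / 2 ≤ a) (hs : 0 < s) :
    ∑' m : ℕ, ENNReal.ofReal (((m:ℝ) + 1) ^ s * Real.exp (-(a * m))) ≤
      ENNReal.ofReal ((2 * s / a) ^ s * Real.exp (a / 2) * 5) := by
  have ha0 : 0 < a := by linarith
  set ρ := Real.exp (-(a / 2)) with hρ
  have hρ0 : 0 < ρ := Real.exp_pos _
  have hρ1 : ρ ≤ 4 / 5 := by
    have h1 : ρ ≤ Real.exp (-(1/4)) := Real.exp_le_exp.2 (by linarith)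
    have h2 : Real.exp (1/4) ≥ 5/4 := by
      have := Real.add_one_le_exp (1/4:ℝ); linarith
    rw [Real.exp_neg] at h1
    have : (Real.exp (1/4))⁻¹ ≤ (5/4:ℝ)⁻¹ := by gcongr
    norm_num at *; linarith
  have hb : ∀ m : ℕ, ((m:ℝ) + 1) ^ s * Real.exp (-(a * m)) ≤
      (2 * s / a) ^ s * Real.exp (a / 2) * ρ ^ m := by
    intro m
    have h1 : ((m:ℝ) + 1) ≤ (2 * s / a) * Real.exp (a * (m + 1) / (2 * s)) := by
      have h2 := Real.add_one_le_exp (a * ((m:ℝ) + 1) / (2 * s))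
      calc (m:ℝ) + 1 = (2 * s / a) * (a * (m + 1) / (2 * s)) := by field_simp
        _ ≤ _ := by gcongr; linarith
    have h3 : ((m:ℝ) + 1) ^ s ≤ (2 * s / a) ^ s * Real.exp (a * (m + 1) / 2) := by
      calc _ ≤ ((2 * s / a) * Real.exp (a * (m + 1) / (2 * s))) ^ s :=
            Real.rpow_le_rpow (by positivity) h1 hs.le
        _ = _ := by
            rw [Real.mul_rpow (by positivity) (by positivity), ← Real.exp_mul]
            congr 2; field_simp
    calc _ ≤ (2 * s / a) ^ s * Real.exp (a * (m + 1) / 2) * Real.exp (-(a * m)) := by gcongr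
      _ = _ := by
        rw [hρ, ← Real.exp_nat_mul, mul_assoc, mul_assoc, ← Real.exp_add, ← Real.exp_add]
        congr 2; ring
  have hsum : Summable fun m : ℕ => (2 * s / a) ^ s * Real.exp (a / 2) * ρ ^ m :=
    (summable_geometric_of_lt_one hρ0.le (by linarith)).mul_left _
  calc _ ≤ ∑' m : ℕ, ENNReal.ofReal ((2 * s / a) ^ s * Real.exp (a / 2) * ρ ^ m) :=
        ENNReal.tsum_le_tsum fun m => ENNReal.ofReal_le_ofReal (hb m)
    _ = ENNReal.ofReal (∑' m : ℕ, (2 * s / a) ^ s * Real.exp (a / 2) * ρ ^ m) :=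
        (ENNReal.ofReal_tsum_of_nonneg (fun m => by positivity) hsum).symm
    _ ≤ _ := by
        apply ENNReal.ofReal_le_ofReal
        rw [tsum_mul_left, tsum_geometric_of_lt_one hρ0.le (by linarith)]
        gcongr
        rw [inv_le_comm₀ (by linarith) (by norm_num)]; linarith

/-- Exponential decay of the tail along the multiples of `t` bounds the `s`-th moment, by slicing
the space according to the integer part of `N / t`. -/
lemma tail_to_moment {F : Type*} [MeasurableSpace F] {ν : Measure F} [IsFiniteMeasure ν]
    {N : F → ℝ} (hN : Measurable N) (hN0 : ∀ x, 0 ≤ N x) {t a s M : ℝ} (ht : 0 < t)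
    (ha : 1 / 2 ≤ a) (hs : 0 < s) (hM : 0 ≤ M)
    (hτ : ∀ m : ℕ, ν.real {x | m * t ≤ N x} ≤ M * Real.exp (-(a * m))) :
    ∫⁻ x, ENNReal.ofReal (N x ^ s) ∂ν ≤
      ENNReal.ofReal (M * t ^ s * ((2 * s / a) ^ s * Real.exp (a / 2) * 5)) := by
  have hme : ∀ u : ℝ, MeasurableSet {x | u ≤ N x} := fun u => measurableSet_le measurable_const hN
  have h1 : ∀ x, ENNReal.ofReal (N x ^ s) ≤ ∑' m : ℕ,
      Set.indicator {x | m * t ≤ N x} (fun _ => ENNReal.ofReal ((((m:ℝ) + 1) * t) ^ s)) x := by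
    intro x
    refine le_trans ?_ (ENNReal.le_tsum ⌊N x / t⌋₊)
    have h2 : (⌊N x / t⌋₊ : ℝ) * t ≤ N x :=
      (le_div_iff₀ ht).1 (Nat.floor_le (div_nonneg (hN0 x) ht.le))
    have h3 : N x ≤ ((⌊N x / t⌋₊ : ℝ) + 1) * t := by
      rw [← div_le_iff₀ ht]; exact (Nat.lt_floor_add_one _).le
    rw [Set.indicator_of_mem (by exact h2)]
    exact ENNReal.ofReal_le_ofReal (Real.rpow_le_rpow (hN0 x) h3 hs.le)
  calc _ ≤ ∫⁻ x, ∑' m : ℕ,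
      Set.indicator {x | m * t ≤ N x} (fun _ => ENNReal.ofReal ((((m:ℝ) + 1) * t) ^ s)) x ∂ν :=
        lintegral_mono h1
    _ = ∑' m : ℕ, ENNReal.ofReal ((((m:ℝ) + 1) * t) ^ s) * ν {x | m * t ≤ N x} := by
        rw [lintegral_tsum fun m => (measurable_const.indicator (hme _)).aemeasurable]
        congr 1; ext m
        rw [lintegral_indicator (hme _), setLIntegral_const]
    _ ≤ ∑' m : ℕ, ENNReal.ofReal (M * t ^ s) *
          ENNReal.ofReal (((m:ℝ) + 1) ^ s * Real.exp (-(a * m))) := by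
        refine ENNReal.tsum_le_tsum fun m => ?_
        rw [← ofReal_measureReal, ← ENNReal.ofReal_mul (by positivity),
          ← ENNReal.ofReal_mul (by positivity)]
        apply ENNReal.ofReal_le_ofReal
        rw [Real.mul_rpow (by positivity) ht.le]
        calc _ ≤ ((m:ℝ) + 1) ^ s * t ^ s * (M * Real.exp (-(a * m))) := by gcongr; exact hτ m
          _ = _ := by ring
    _ ≤ _ := by
        rw [ENNReal.tsum_mul_left]
        exact (mul_le_mul' le_rfl (sum_pow_exp a s ha hs)).trans
          (ENNReal.ofReal_mul (by positivity)).symm.le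

/-- Reverse Hölder inequality for log-concave measures: the `s`-th moment of `N` is controlled by
a bound `A` of its `q`-norm, with a loss `O(s / q)`. -/
lemma LCM.moment_compare {F : Type*} [NormedAddCommGroup F] [NormedSpace ℝ F]
    [MeasurableSpace F] {ν : Measure F} [IsProbabilityMeasure ν] (h : LCM ν) {N : F → ℝ}
    (hN : SemiLike N) {q s A : ℝ} (hq : 1 ≤ q) (hqs : q ≤ s) (hA : 0 < A)
    (hint : ∫⁻ x, ENNReal.ofReal (N x ^ q) ∂ν ≤ ENNReal.ofReal (A ^ q)) :
    ∫⁻ x, ENNReal.ofReal (N x ^ s) ∂ν ≤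
      ENNReal.ofReal ((10 * Real.exp 5 * (s / q) * A) ^ s) := by
  have hq0 : 0 < q := by linarith
  have hs0 : 0 < s := by linarith
  set t := Real.exp 4 * A with ht
  have ht0 : 0 < t := by positivity
  have hmark : ν.real {x | t ≤ N x} ≤ Real.exp (-(4 * q)) := by
    have h1 : ENNReal.ofReal (t ^ q) * ν {x | t ≤ N x} ≤ ENNReal.ofReal (A ^ q) := by
      refine le_trans ?_ hint
      refine le_trans ?_ (mul_meas_ge_le_lintegral
        ((hN.meas.pow_const q).ennreal_ofReal) (ENNReal.ofReal (t ^ q)))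
      gcongr with x
      intro hx
      exact ENNReal.ofReal_le_ofReal (Real.rpow_le_rpow ht0.le hx hq0.le)
    rw [← ofReal_measureReal, ← ENNReal.ofReal_mul (by positivity),
      ENNReal.ofReal_le_ofReal_iff (by positivity), ht, Real.mul_rpow (by positivity) hA.le,
      ← Real.exp_mul] at h1
    have h2 : 0 < A ^ q := by positivity
    rw [Real.exp_neg, ← mul_one (Real.exp (4*q))⁻¹, ← div_eq_inv_mul, le_div_iff₀ (Real.exp_pos _)]
    by_contra hcon
    push Not at hcon
    nlinarith
  have htail : ∀ m : ℕ, ν.real {x | m * t ≤ N x} ≤ 1 * Real.exp (-(q * m)) := by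
    intro m
    rcases Nat.eq_zero_or_pos m with rfl | hm
    · simp
    · rw [one_mul]
      exact borell_tail h hN hq hmark (by exact_mod_cast hm)
  refine (tail_to_moment hN.meas hN.nonneg ht0 (by linarith) hs0 zero_le_one htail).trans ?_
  apply ENNReal.ofReal_le_ofReal
  have h5 : (5:ℝ) ≤ 5 ^ s := by
    calc (5:ℝ) = 5 ^ (1:ℝ) := by simp
      _ ≤ _ := Real.rpow_le_rpow_of_exponent_le (by norm_num) (by linarith)
  have he : Real.exp (q / 2) ≤ Real.exp 1 ^ s := by
    rw [← Real.exp_mul]; exact Real.exp_le_exp.2 (by linarith)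
  calc _ ≤ 1 * t ^ s * ((2 * s / q) ^ s * Real.exp 1 ^ s * 5 ^ s) := by gcongr
    _ = (t * (2 * s / q * Real.exp 1 * 5)) ^ s := by
      rw [Real.mul_rpow (x := t) (by positivity) (by positivity),
        Real.mul_rpow (x := 2 * s / q * Real.exp 1) (by positivity) (by positivity),
        Real.mul_rpow (x := 2 * s / q) (by positivity) (by positivity)]; ring
    _ = _ := by
      congr 1
      have : Real.exp 5 = Real.exp 4 * Real.exp 1 := by rw [← Real.exp_add]; norm_num
      rw [ht, this]; ring

lemma LCM.integrable_norm_rpow {F : Type*} [NormedAddCommGroup F] [NormedSpace ℝ F]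
    [MeasurableSpace F] [BorelSpace F] {ν : Measure F} [IsProbabilityMeasure ν] (h : LCM ν)
    {s : ℝ} (hs : 1 ≤ s) : Integrable (fun x => ‖x‖ ^ s) ν := by
  have hs0 : 0 < s := by linarith
  have hN := semiLike_norm (F := F)
  have hme : ∀ u : ℝ, MeasurableSet {x : F | u ≤ ‖x‖} := fun u => measurableSet_le measurable_const hN.meas
  have hlim : Filter.Tendsto (fun n : ℕ => ν {x : F | (n:ℝ) ≤ ‖x‖}) Filter.atTop
      (nhds (ν (⋂ n : ℕ, {x : F | (n:ℝ) ≤ ‖x‖}))) := by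
    refine tendsto_measure_iInter_atTop (fun n => (hme _).nullMeasurableSet) ?_ ⟨0, by finiteness⟩
    intro m n hmn x hx
    exact le_trans (show (m:ℝ) ≤ n by exact_mod_cast hmn) (show (n:ℝ) ≤ ‖x‖ from hx)
  have hemp : (⋂ n : ℕ, {x : F | (n:ℝ) ≤ ‖x‖}) = ∅ := by
    ext x
    simp only [Set.mem_iInter, Set.mem_ofPred_eq, Set.mem_empty_iff_false, iff_false, not_forall, not_le]
    exact exists_nat_gt _
  rw [hemp, measure_empty] at hlim
  have hpos : (0:ℝ≥0∞) < ENNReal.ofReal (Real.exp (-(4 * 1))) := by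
    simp [Real.exp_pos]
  obtain ⟨n, hn, hn1⟩ := ((hlim.eventually_lt_const hpos).and (Filter.eventually_ge_atTop 1)).exists
  have hn2 : ν.real {x : F | (n:ℝ) ≤ ‖x‖} ≤ Real.exp (-(4 * 1)) :=
    ENNReal.toReal_le_of_le_ofReal (Real.exp_pos _).le hn.le
  have htail : ∀ m : ℕ, ν.real {x : F | m * (n:ℝ) ≤ ‖x‖} ≤ 1 * Real.exp (-(1 * m)) := by
    intro m
    rcases Nat.eq_zero_or_pos m with rfl | hm
    · simp
    · rw [one_mul]
      exact borell_tail h hN le_rfl hn2 (by exact_mod_cast hm)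
  have h1 := tail_to_moment hN.meas hN.nonneg (by exact_mod_cast hn1) (by norm_num) hs0 zero_le_one htail
  refine ⟨(hN.meas.pow_const s).aestronglyMeasurable, ?_⟩
  rw [hasFiniteIntegral_iff_ofReal (Filter.Eventually.of_forall fun x => by positivity)]
  exact h1.trans_lt ENNReal.ofReal_lt_top

lemma LCM.integrable_clm_rpow {F : Type*} [NormedAddCommGroup F] [NormedSpace ℝ F]
    [MeasurableSpace F] [BorelSpace F] {ν : Measure F} [IsProbabilityMeasure ν] (h : LCM ν)
    (φ : F →L[ℝ] ℝ) {s : ℝ} (hs : 1 ≤ s) : Integrable (fun x => |φ x| ^ s) ν := by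
  refine ((h.integrable_norm_rpow hs).const_mul (‖φ‖ ^ s)).mono'
    ((φ.continuous.measurable.abs.pow_const s).aestronglyMeasurable)
    (Filter.Eventually.of_forall fun x => ?_)
  rw [Real.norm_of_nonneg (by positivity), ← Real.mul_rpow (by positivity) (by positivity)]
  exact Real.rpow_le_rpow (abs_nonneg _) (φ.le_opNorm x) (by linarith)

lemma LCM.integrable_clm {F : Type*} [NormedAddCommGroup F] [NormedSpace ℝ F]
    [MeasurableSpace F] [BorelSpace F] {ν : Measure F} [IsProbabilityMeasure ν] (h : LCM ν)
    (φ : F →L[ℝ] ℝ) : Integrable (fun x => φ x) ν := by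
  have := h.integrable_clm_rpow φ le_rfl
  simp only [Real.rpow_one] at this
  exact (integrable_norm_iff φ.continuous.measurable.aestronglyMeasurable).1 this

/-- Reverse Hölder inequality for functionals, with Bochner integrals. -/
lemma LCM.moment_clm {F : Type*} [NormedAddCommGroup F] [NormedSpace ℝ F]
    [MeasurableSpace F] [BorelSpace F] {ν : Measure F} [IsProbabilityMeasure ν] (h : LCM ν)
    (φ : F →L[ℝ] ℝ) {q s A : ℝ} (hq : 1 ≤ q) (hqs : q ≤ s) (hA : 0 < A)
    (hint : ∫ x, |φ x| ^ q ∂ν ≤ A ^ q) :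
    ∫ x, |φ x| ^ s ∂ν ≤ (10 * Real.exp 5 * (s / q) * A) ^ s := by
  have h1 := h.moment_compare (semiLike_clm φ) hq hqs hA (by
    rw [← ofReal_integral_eq_lintegral_ofReal (h.integrable_clm_rpow φ hq)
      (Filter.Eventually.of_forall fun x => by positivity)]
    exact ENNReal.ofReal_le_ofReal hint)
  rw [← ofReal_integral_eq_lintegral_ofReal (h.integrable_clm_rpow φ (hq.trans hqs))
      (Filter.Eventually.of_forall fun x => by positivity)] at h1
  have : 0 < s := by linarith
  have : 0 < q := by linarith
  rwa [ENNReal.ofReal_le_ofReal_iff (by positivity)] at h1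

/-! ### Cells cut out by functionals and their number -/

lemma tsum_fin_pi (j : ℕ) (f : Fin j → ℤ → ℝ≥0∞) :
    ∑' n : Fin j → ℤ, ∏ m, f m (n m) = ∏ m, ∑' t, f m t := by
  induction j with
  | zero => simp
  | succ j ih =>
    rw [← (Fin.consEquiv fun _ : Fin (j + 1) => ℤ).tsum_eq, ENNReal.tsum_prod', Fin.prod_univ_succ,
      ← ENNReal.tsum_mul_right]
    congr 1; ext t
    rw [← ih, ← ENNReal.tsum_mul_left]
    congr 1; ext n
    simp [Fin.consEquiv, Fin.prod_univ_succ]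

lemma summable_int_of_nat {f : ℕ → ℝ} (hf : Summable f) : Summable fun u : ℤ => f u.natAbs := by
  rw [summable_int_iff_summable_nat_and_neg]
  simpa using hf

/-- The constant `∑_{u ∈ ℤ} e^{1-|u|}`. -/
noncomputable def cZ : ℝ := ∑' u : ℤ, Real.exp (1 - (u.natAbs : ℝ))

lemma summable_cZ : Summable fun u : ℤ => Real.exp (1 - (u.natAbs : ℝ)) := by
  refine summable_int_of_nat (f := fun m : ℕ => Real.exp (1 - (m : ℝ))) ?_
  simp only [sub_eq_add_neg, Real.exp_add]
  exact Real.summable_exp_neg_nat.mul_left _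

lemma cZ_ge_one : 1 ≤ cZ := by
  have h := summable_cZ.le_tsum 0 (fun _ _ => (Real.exp_pos _).le)
  have h2 : (1:ℝ) ≤ Real.exp (1 - ((0:ℤ).natAbs : ℝ)) := Real.one_le_exp (by simp)
  exact h2.trans h

lemma tsum_exp_int (y : ℝ) :
    ∑' t : ℤ, ENNReal.ofReal (Real.exp (-|y - t|)) ≤ ENNReal.ofReal cZ := by
  rw [cZ, ENNReal.ofReal_tsum_of_nonneg (fun _ => (Real.exp_pos _).le) summable_cZ,
    ← (Equiv.addRight ⌊y⌋).tsum_eq]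
  refine ENNReal.tsum_le_tsum fun u => ENNReal.ofReal_le_ofReal (Real.exp_le_exp.2 ?_)
  have h1 := Int.floor_le y
  have h2 := Int.lt_floor_add_one y
  have h3 : ((u.natAbs : ℕ) : ℝ) = |(u:ℝ)| := by rw [Nat.cast_natAbs]; simp
  rw [h3]
  have h4 : |(u:ℝ)| ≤ |y - (u + ⌊y⌋)| + |y - ⌊y⌋| := by
    have := abs_sub (y - (u + (⌊y⌋:ℝ))) (y - ⌊y⌋)
    rw [show y - (u + (⌊y⌋:ℝ)) - (y - ⌊y⌋) = -u by ring, abs_neg] at this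
    exact this
  rw [abs_of_nonneg (sub_nonneg.2 h1)] at h4
  simp only [Equiv.coe_addRight, Int.cast_add]
  linarith

/-- The cell of points whose coordinates `ψ m` have prescribed integer parts. -/
def cell {F : Type*} [NormedAddCommGroup F] [NormedSpace ℝ F] {j : ℕ} (ψ : Fin j → F →L[ℝ] ℝ)
    (n : Fin j → ℤ) : Set F := {x | ∀ m, ⌊ψ m x⌋ = n m}

lemma measurableSet_floor_eq {F : Type*} [NormedAddCommGroup F] [NormedSpace ℝ F]
    [MeasurableSpace F] [BorelSpace F] (φ : F →L[ℝ] ℝ) (t : ℤ) : MeasurableSet {x | ⌊φ x⌋ = t} :=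
  (Int.measurable_floor.comp φ.continuous.measurable) (measurableSet_singleton t)

lemma convex_floor_eq {F : Type*} [NormedAddCommGroup F] [NormedSpace ℝ F]
    (φ : F →L[ℝ] ℝ) (t : ℤ) : Convex ℝ {x | ⌊φ x⌋ = t} := by
  have : {x | ⌊φ x⌋ = t} = φ.toLinearMap ⁻¹' (Set.Ico (t:ℝ) (t + 1)) := by
    ext x; simp [Int.floor_eq_iff]
  rw [this]
  exact (convex_Ico _ _).linear_preimage _

lemma measurableSet_cell {F : Type*} [NormedAddCommGroup F] [NormedSpace ℝ F]
    [MeasurableSpace F] [BorelSpace F] {j : ℕ} (ψ : Fin j → F →L[ℝ] ℝ) (n : Fin j → ℤ) :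
    MeasurableSet (cell ψ n) := by
  rw [cell, Set.ofPred_forall]
  exact MeasurableSet.iInter fun m => measurableSet_floor_eq _ _

lemma convex_cell {F : Type*} [NormedAddCommGroup F] [NormedSpace ℝ F]
    {j : ℕ} (ψ : Fin j → F →L[ℝ] ℝ) (n : Fin j → ℤ) : Convex ℝ (cell ψ n) := by
  rw [cell, Set.ofPred_forall]
  exact convex_iInter fun m => convex_floor_eq _ _

/-- The masses of the cells sum up to `e^{O(j)}` even after taking square roots, so that
effectively there are `e^{O(j)}` cells. By log-concavity `√μ(cell)` is at most twice the mass of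
the midpoint set of the cell and of a set of mass at least `1/2` on which `∑ |ψ m|` is `O(j)`, and
a point lies in at most `e^{O(j)}` of these midpoint sets. -/
lemma cell_sum {F : Type*} [NormedAddCommGroup F] [NormedSpace ℝ F]
    [MeasurableSpace F] [BorelSpace F] {μ : Measure F} [IsProbabilityMeasure μ] (h : LCM μ)
    {j : ℕ} (ψ : Fin j → F →L[ℝ] ℝ) (hψ : ∀ m, ∫ x, |ψ m x| ∂μ ≤ 1) :
    ∑' n : Fin j → ℤ, ENNReal.ofReal (μ.real (cell ψ n) ^ (1 / 2 : ℝ)) ≤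
      ENNReal.ofReal (2 * Real.exp (3 * j + 2) * cZ ^ j) := by
  set K : Set F := {x | ∑ m, |ψ m x| ≤ 2 * j + 2} with hK
  have hmK : MeasurableSet K := measurableSet_le
    (Finset.measurable_sum _ fun m _ => (ψ m).continuous.measurable.abs) measurable_const
  have hK2 : 1 / 2 ≤ μ.real K := by
    have hi : ∀ m, Integrable (fun x => |ψ m x|) μ := fun m => (h.integrable_clm (ψ m)).abs
    have h1 := mul_meas_ge_le_integral_of_nonneg (μ := μ) (f := fun x => ∑ m, |ψ m x|)
      (Filter.Eventually.of_forall fun x => Finset.sum_nonneg fun m _ => abs_nonneg _)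
      (integrable_finsetSum _ fun m _ => hi m) (2 * j + 2 : ℝ)
    rw [integral_finsetSum _ fun m _ => hi m] at h1
    have h2 : ∑ m : Fin j, ∫ x, |ψ m x| ∂μ ≤ j := by
      simpa using Finset.sum_le_sum (s := Finset.univ) fun m _ => hψ m
    have h3 : μ.real Kᶜ ≤ μ.real {x | (2 * j + 2 : ℝ) ≤ ∑ m, |ψ m x|} := by
      refine measureReal_mono (fun x hx => ?_)
      simp only [hK, Set.mem_compl_iff, Set.mem_ofPred_eq, not_le] at hx ⊢
      exact hx.le
    rw [probReal_compl_eq_one_sub hmK] at h3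
    have h4 : (2 * j + 2 : ℝ) * (1 - μ.real K) ≤ j :=
      ((mul_le_mul_of_nonneg_left h3 (by positivity)).trans h1).trans h2
    have : (0:ℝ) ≤ j := by positivity
    by_contra hcon
    push Not at hcon
    nlinarith
  set U : (Fin j → ℤ) → Set F := fun n => {x | ∑ m, |2 * ψ m x - n m| ≤ 3 * j + 2} with hU
  have hmU : ∀ n, MeasurableSet (U n) := fun n => measurableSet_le
    (Finset.measurable_sum _ fun m _ =>
      (((ψ m).continuous.measurable.const_mul 2).sub_const _).abs) measurable_const
  have hb : ∀ n, μ.real (cell ψ n) ^ (1 / 2 : ℝ) ≤ 2 * μ.real (U n) := by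
    intro n
    have h1 := h (cell ψ n) K (U n) (measurableSet_cell ψ n) hmK (hmU n) (1/2) (by norm_num)
      (by norm_num) (by
        intro x hx y hy
        simp only [hU, hK, cell, Set.mem_ofPred_eq] at hx hy ⊢
        have h2 : ∀ m, |2 * ψ m ((1/2:ℝ) • x + (1 - 1/2 : ℝ) • y) - n m| ≤ 1 + |ψ m y| := by
          intro m
          have h3 := Int.floor_eq_iff.1 (hx m)
          have h4 : 2 * ψ m ((1/2:ℝ) • x + (1 - 1/2 : ℝ) • y) - n m = (ψ m x - n m) + ψ m y := by
            simp; ring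
          rw [h4]
          refine (abs_add_le _ _).trans ?_
          gcongr
          rw [abs_le]; constructor <;> linarith
        calc _ ≤ ∑ m : Fin j, (1 + |ψ m y|) := Finset.sum_le_sum fun m _ => h2 m
          _ ≤ _ := by
            rw [Finset.sum_add_distrib]; simp; linarith)
    have h5 : (1/2:ℝ) ≤ μ.real K ^ (1 - 1/2 : ℝ) := by
      calc (1/2:ℝ) = (1/2:ℝ) ^ (1:ℝ) := by simp
        _ ≤ (1/2:ℝ) ^ (1 - 1/2 : ℝ) :=
          Real.rpow_le_rpow_of_exponent_ge (by norm_num) (by norm_num) (by norm_num)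
        _ ≤ _ := Real.rpow_le_rpow (by norm_num) hK2 (by norm_num)
    have h6 : 0 ≤ μ.real (cell ψ n) ^ (1 / 2 : ℝ) := by positivity
    nlinarith
  -- bounded overlap, through `1_U ≤ e^{3j+2} ∏ e^{-|2 ψ m - n m|}`
  have hc : ∀ x, ∑' n, (U n).indicator (fun _ => (1:ℝ≥0∞)) x ≤
      ENNReal.ofReal (Real.exp (3 * j + 2) * cZ ^ j) := by
    intro x
    calc _ ≤ ∑' n : Fin j → ℤ, ENNReal.ofReal (Real.exp (3 * j + 2)) *
          ∏ m, ENNReal.ofReal (Real.exp (-|2 * ψ m x - n m|)) := by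
          refine ENNReal.tsum_le_tsum fun n => ?_
          by_cases hx : x ∈ U n
          · rw [Set.indicator_of_mem hx, ← ENNReal.ofReal_prod_of_nonneg (fun _ _ => by positivity),
              ← ENNReal.ofReal_mul (by positivity), ← Real.exp_sum, ← Real.exp_add,
              ENNReal.one_le_ofReal]
            apply Real.one_le_exp
            rw [Finset.sum_neg_distrib]
            have : ∑ m, |2 * ψ m x - n m| ≤ 3 * j + 2 := hx
            linarith
          · rw [Set.indicator_of_notMem hx]; exact zero_le
      _ = ENNReal.ofReal (Real.exp (3 * j + 2)) *
          ∏ m : Fin j, ∑' t : ℤ, ENNReal.ofReal (Real.exp (-|2 * ψ m x - t|)) := by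
          rw [ENNReal.tsum_mul_left, tsum_fin_pi j
            fun m t => ENNReal.ofReal (Real.exp (-|2 * ψ m x - t|))]
      _ ≤ ENNReal.ofReal (Real.exp (3 * j + 2)) * ∏ m : Fin j, ENNReal.ofReal cZ := by
          gcongr with m
          exact tsum_exp_int _
      _ = _ := by
          rw [ENNReal.ofReal_mul (by positivity), ENNReal.ofReal_pow (zero_le_one.trans cZ_ge_one)]
          simp
  calc _ ≤ ∑' n, 2 * μ (U n) := by
        refine ENNReal.tsum_le_tsum fun n => ?_
        refine (ENNReal.ofReal_le_ofReal (hb n)).trans ?_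
        rw [ENNReal.ofReal_mul (by norm_num), ofReal_measureReal]; simp
    _ = 2 * ∫⁻ x, ∑' n, (U n).indicator (fun _ => (1:ℝ≥0∞)) x ∂μ := by
        rw [ENNReal.tsum_mul_left, lintegral_tsum
          fun n => (measurable_const.indicator (hmU n)).aemeasurable]
        congr 2; ext n
        rw [lintegral_indicator (hmU n)]; simp
    _ ≤ 2 * ∫⁻ x, ENNReal.ofReal (Real.exp (3 * j + 2) * cZ ^ j) ∂μ := by
        gcongr with x
        exact hc x
    _ = _ := by
        rw [lintegral_const, measure_univ, mul_one, mul_assoc, ENNReal.ofReal_mul (p := 2) (by norm_num)]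
        simp

/-! ### A heavy slab controls the spread of a functional -/

/-- The decay rate `2^{-1/(2K)}`. -/
noncomputable def rho (K : ℕ) : ℝ := (1 / 2 : ℝ) ^ (1 / (2 * K : ℝ))

lemma rho_pos (K : ℕ) : 0 < rho K := by unfold rho; positivity

lemma rho_lt_one {K : ℕ} (hK : 1 ≤ K) : rho K < 1 := by
  have : (1:ℝ) ≤ K := by exact_mod_cast hK
  exact Real.rpow_lt_one (by norm_num) (by norm_num) (by positivity)

/-- The constant `∑_{u ∈ ℤ} 2 (|u| + 1) 2^{-|u|/(2K)}`. -/
noncomputable def Lam (K : ℕ) : ℝ := ∑' u : ℤ, 2 * ((u.natAbs : ℝ) + 1) * rho K ^ u.natAbs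

lemma summable_Lam {K : ℕ} (hK : 1 ≤ K) :
    Summable fun u : ℤ => 2 * ((u.natAbs : ℝ) + 1) * rho K ^ u.natAbs := by
  refine summable_int_of_nat (f := fun m : ℕ => 2 * ((m : ℝ) + 1) * rho K ^ m) ?_
  have h0 := rho_pos K
  have h1 := rho_lt_one hK
  have h2 : Summable fun m : ℕ => (m:ℝ) ^ 1 * rho K ^ m :=
    summable_pow_mul_geometric_of_norm_lt_one 1 (by rwa [Real.norm_of_nonneg h0.le])
  have h3 := summable_geometric_of_lt_one h0.le h1
  refine ((h2.mul_left 2).add (h3.mul_left 2)).congr fun m => ?_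
  ring

lemma Lam_pos {K : ℕ} (hK : 1 ≤ K) : 0 < Lam K := by
  have h0 := rho_pos K
  have h := (summable_Lam hK).le_tsum 0 (fun _ _ => by positivity)
  refine lt_of_lt_of_le ?_ h
  simp

lemma sum_cells_le {F : Type*} [NormedAddCommGroup F] [NormedSpace ℝ F]
    [MeasurableSpace F] [BorelSpace F] {ν : Measure F} [IsFiniteMeasure ν]
    (ψ : F →L[ℝ] ℝ) (S : Finset ℤ) :
    ∑ u ∈ S, ν.real {x | ⌊ψ x⌋ = u} ≤ ν.real Set.univ := by
  rw [← measureReal_biUnion_finset (fun a _ b _ hab => ?_) (fun u _ => measurableSet_floor_eq ψ u)]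
  · exact measureReal_mono (Set.subset_univ _)
  · refine Set.disjoint_left.2 fun x hx hy => hab ?_
    simp only [Set.mem_ofPred_eq] at hx hy
    rw [← hx, ← hy]

/-- A heavy slab forces exponential decay of the masses of the parallel slabs, in either direction
`σ = ±1`: among the next `2K` slabs one has at most half the mass of the heavy one, and from there
on log-concavity makes the sequence of masses decrease geometrically. -/
lemma slab_decay {F : Type*} [NormedAddCommGroup F] [NormedSpace ℝ F]
    [MeasurableSpace F] [BorelSpace F] {ν : Measure F} [IsFiniteMeasure ν] (h : LCM ν)
    (ψ : F →L[ℝ] ℝ) {K : ℕ} (hK : 1 ≤ K) (t : ℤ)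
    (hbig : ν.real Set.univ < K * ν.real {x | ⌊ψ x⌋ = t}) {σ : ℤ} (hσ : σ ≠ 0) (j : ℕ) :
    ν.real {x | ⌊ψ x⌋ = t + σ * j} ≤ 2 * ν.real Set.univ * rho K ^ j := by
  set α := ν.real Set.univ with hα
  have hK0 : (0:ℝ) < K := by exact_mod_cast hK
  have hα0 : 0 ≤ α := measureReal_nonneg
  set f : ℕ → ℝ := fun j => ν.real {x | ⌊ψ x⌋ = t + σ * j} with hf
  have hf0 : f 0 = ν.real {x | ⌊ψ x⌋ = t} := by simp [hf]
  have hfn : ∀ j, 0 ≤ f j := fun j => measureReal_nonneg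
  have hfα : ∀ j, f j ≤ α := fun j => measureReal_mono (Set.subset_univ _)
  rw [← hf0] at hbig
  have hf0p : 0 < f 0 := by
    by_contra hc
    have : f 0 = 0 := le_antisymm (not_lt.1 hc) (hfn 0)
    rw [this] at hbig; linarith
  obtain ⟨m, hm1, hm2, hm3⟩ : ∃ m : ℕ, 1 ≤ m ∧ m ≤ 2 * K ∧ f m ≤ f 0 / 2 := by
    by_contra hcon
    push Not at hcon
    have h1 : ∑ u ∈ (Finset.Icc 1 (2 * K)).image (fun m : ℕ => t + σ * (m:ℤ)),
        ν.real {x | ⌊ψ x⌋ = u} ≤ α := sum_cells_le ψ _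
    rw [Finset.sum_image (by
      intro a _ b _ hab
      have : σ * (a:ℤ) = σ * b := by simpa using hab
      exact_mod_cast mul_left_cancel₀ hσ this)] at h1
    have h2 : ∑ m ∈ Finset.Icc 1 (2 * K), f 0 / 2 ≤ ∑ m ∈ Finset.Icc 1 (2 * K), f m :=
      Finset.sum_le_sum fun m hm => by
        rw [Finset.mem_Icc] at hm; exact (hcon m hm.1 hm.2).le
    have h3 := h2.trans h1
    simp at h3
    linarith
  have hm0 : (0:ℝ) < m := by exact_mod_cast hm1
  have hρ0 := rho_pos K
  have hρ1 := rho_lt_one hK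
  -- for `j < m ≤ 2K` the trivial bound suffices, as `ρ^j ≥ 1/2` there
  rcases lt_or_ge j m with hjm | hjm
  · have h4 : (1/2:ℝ) ≤ rho K ^ j := by
      have h5 : rho K ^ (2 * K) = 1 / 2 := by
        rw [rho, ← Real.rpow_natCast, ← Real.rpow_mul (by norm_num)]
        rw [show (1 / (2 * K : ℝ)) * ((2 * K : ℕ) : ℝ) = 1 by push_cast; field_simp]
        simp
      rw [← h5]
      exact pow_le_pow_of_le_one hρ0.le hρ1.le (by omega)
    have := hfα j
    change f j ≤ _
    nlinarith
  · have hj0 : (0:ℝ) < j := by exact_mod_cast (by omega : 0 < j)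
    have h6 : f j ≤ f 0 * (1/2:ℝ) ^ (j / m : ℝ) := by
      rcases hjm.eq_or_lt with rfl | hjm
      · rw [div_self hm0.ne', Real.rpow_one]; linarith
      · have hl1 : (m / j : ℝ) < 1 := by
          rw [div_lt_one hj0]; exact_mod_cast hjm
        have h7 := h {x | ⌊ψ x⌋ = t + σ * j} {x | ⌊ψ x⌋ = t} {x | ⌊ψ x⌋ = t + σ * m}
          (measurableSet_floor_eq _ _) (measurableSet_floor_eq _ _) (measurableSet_floor_eq _ _)
          (m / j) (by positivity) hl1 (by
            intro x hx y hy
            simp only [Set.mem_ofPred_eq, Int.floor_eq_iff] at hx hy ⊢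
            push_cast at hx ⊢
            set l : ℝ := m / j
            have hl0 : 0 < l := by positivity
            have hlj : l * j = m := by simp only [l]; field_simp
            simp only [map_add, map_smul, smul_eq_mul]
            have e : (t:ℝ) + σ * m = l * (t + σ * j) + (1 - l) * t := by rw [← hlj]; ring
            rw [e]
            constructor
            · have := mul_le_mul_of_nonneg_left hx.1 hl0.le
              have := mul_le_mul_of_nonneg_left hy.1 (sub_pos.2 hl1).le
              linarith
            · have := mul_lt_mul_of_pos_left hx.2 hl0
              have := mul_lt_mul_of_pos_left hy.2 (sub_pos.2 hl1)
              linarith)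
        have h8 : f j ^ (m / j : ℝ) * f 0 ^ (1 - m / j : ℝ) ≤ f 0 / 2 := by
          refine le_trans ?_ hm3
          rw [hf0]; exact h7
        have h9 : f 0 ^ (1 - m / j : ℝ) * f 0 ^ (m / j : ℝ) = f 0 := by
          rw [← Real.rpow_add hf0p]; simp
        have h10 : f j ^ (m / j : ℝ) ≤ f 0 ^ (m / j : ℝ) / 2 := by
          have h11 : 0 < f 0 ^ (1 - m / j : ℝ) := by positivity
          rw [← mul_le_mul_iff_left₀ h11]
          nlinarith
        calc f j = (f j ^ (m / j : ℝ)) ^ (j / m : ℝ) := by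
              rw [← Real.rpow_mul (hfn j)]
              rw [show (m / j : ℝ) * (j / m) = 1 by field_simp, Real.rpow_one]
          _ ≤ (f 0 ^ (m / j : ℝ) * (1 / 2)) ^ (j / m : ℝ) :=
              Real.rpow_le_rpow (Real.rpow_nonneg (hfn j) _) (by linarith) (by positivity)
          _ = _ := by
              rw [Real.mul_rpow (by positivity) (by norm_num), ← Real.rpow_mul hf0p.le]
              rw [show (m / j : ℝ) * (j / m) = 1 by field_simp, Real.rpow_one]
    have h12 : (1/2:ℝ) ^ (j / m : ℝ) ≤ rho K ^ j := by
      rw [rho, ← Real.rpow_natCast, ← Real.rpow_mul (by norm_num)]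
      apply Real.rpow_le_rpow_of_exponent_ge (by norm_num) (by norm_num)
      rw [one_div_mul_eq_div]
      have : (m:ℝ) ≤ 2 * K := by exact_mod_cast hm2
      gcongr
    have h13 : 0 < rho K ^ j := by positivity
    have := hfα 0
    change f j ≤ _
    nlinarith [mul_le_mul_of_nonneg_left h12 hf0p.le]

/-- If one slab `⌊ψ⌋ = t` carries more than a `1/K` fraction of the mass, then `∫ |ψ|` exceeds
`|∫ ψ|` by at most a multiple of the total mass depending on `K` only. -/
lemma floor_spread {F : Type*} [NormedAddCommGroup F] [NormedSpace ℝ F]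
    [MeasurableSpace F] [BorelSpace F] {ν : Measure F} [IsFiniteMeasure ν] (h : LCM ν)
    (ψ : F →L[ℝ] ℝ) (hi : Integrable (fun x => ψ x) ν) {K : ℕ} (hK : 1 ≤ K) (t : ℤ)
    (hbig : ν.real Set.univ < K * ν.real {x | ⌊ψ x⌋ = t}) :
    ∫ x, |ψ x| ∂ν ≤ |∫ x, ψ x ∂ν| + 2 * Lam K * ν.real Set.univ := by
  set α := ν.real Set.univ with hα
  have hα0 : 0 ≤ α := measureReal_nonneg
  have hρ0 := rho_pos K
  have hdec : ∀ u : ℤ, ν.real {x | ⌊ψ x⌋ = t + u} ≤ 2 * α * rho K ^ u.natAbs := by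
    intro u
    rcases le_total 0 u with hu | hu
    · have := slab_decay h ψ hK t hbig one_ne_zero u.natAbs
      rwa [one_mul, Int.natAbs_of_nonneg hu] at this
    · have := slab_decay h ψ hK t hbig (neg_ne_zero.2 one_ne_zero) u.natAbs
      rwa [Int.ofNat_natAbs_of_nonpos hu, neg_one_mul, neg_neg] at this
  have hit : Integrable (fun x => ψ x - t) ν := hi.sub (integrable_const _)
  have h1 : ∫⁻ x, ENNReal.ofReal |ψ x - t| ∂ν ≤ ENNReal.ofReal (Lam K * α) := by
    calc _ ≤ ∫⁻ x, ∑' u : ℤ, Set.indicator {x | ⌊ψ x⌋ = t + u}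
            (fun _ => ENNReal.ofReal ((u.natAbs : ℝ) + 1)) x ∂ν := by
          refine lintegral_mono fun x => ?_
          refine le_trans ?_ (ENNReal.le_tsum (⌊ψ x⌋ - t))
          rw [Set.indicator_of_mem (by simp)]
          apply ENNReal.ofReal_le_ofReal
          have h3 : (((⌊ψ x⌋ - t).natAbs : ℕ) : ℝ) = |(⌊ψ x⌋:ℝ) - t| := by
            rw [Nat.cast_natAbs]; simp
          rw [h3]
          have h4 := abs_add_le ((⌊ψ x⌋:ℝ) - t) (ψ x - ⌊ψ x⌋)
          rw [abs_of_nonneg (sub_nonneg.2 (Int.floor_le (ψ x)))] at h4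
          have := Int.lt_floor_add_one (ψ x)
          rw [show ψ x - t = ((⌊ψ x⌋:ℝ) - t) + (ψ x - ⌊ψ x⌋) by ring]
          linarith
      _ = ∑' u : ℤ, ENNReal.ofReal ((u.natAbs : ℝ) + 1) * ν {x | ⌊ψ x⌋ = t + u} := by
          rw [lintegral_tsum fun u =>
            (measurable_const.indicator (measurableSet_floor_eq ψ (t + u))).aemeasurable]
          congr 1; ext u
          rw [lintegral_indicator (measurableSet_floor_eq ψ (t + u)), setLIntegral_const]
      _ ≤ ∑' u : ℤ, ENNReal.ofReal (2 * ((u.natAbs : ℝ) + 1) * rho K ^ u.natAbs * α) := by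
          refine ENNReal.tsum_le_tsum fun u => ?_
          rw [← ofReal_measureReal, ← ENNReal.ofReal_mul (by positivity)]
          apply ENNReal.ofReal_le_ofReal
          calc _ ≤ ((u.natAbs : ℝ) + 1) * (2 * α * rho K ^ u.natAbs) := by
                gcongr; exact hdec u
            _ = _ := by ring
      _ = _ := by
          rw [← ENNReal.ofReal_tsum_of_nonneg (fun u => by positivity)
            ((summable_Lam hK).mul_right α), tsum_mul_right, Lam]
  have h2 : ∫ x, |ψ x - t| ∂ν ≤ Lam K * α := by
    rw [← ofReal_integral_eq_lintegral_ofReal hit.abs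
      (Filter.Eventually.of_forall fun x => abs_nonneg _)] at h1
    exact (ENNReal.ofReal_le_ofReal_iff (mul_nonneg (Lam_pos hK).le hα0)).1 h1
  have h3 : |(t:ℝ)| * α ≤ |∫ x, ψ x ∂ν| + Lam K * α := by
    have e : (t:ℝ) * α = ∫ x, ψ x ∂ν - ∫ x, (ψ x - t) ∂ν := by
      rw [integral_sub hi (integrable_const _), integral_const, smul_eq_mul, ← hα]; ring
    rw [← abs_of_nonneg hα0, ← abs_mul, abs_of_nonneg hα0, e]
    refine (abs_sub _ _).trans ?_
    gcongr
    exact (abs_integral_le_integral_abs).trans h2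
  have h4 : ∫ x, |ψ x| ∂ν ≤ ∫ x, |ψ x - t| ∂ν + |(t:ℝ)| * α := by
    have e : |(t:ℝ)| * α = ∫ _, |(t:ℝ)| ∂ν := by
      rw [integral_const, smul_eq_mul, ← hα]; ring
    rw [e, ← integral_add hit.abs (integrable_const _)]
    refine integral_mono hi.abs (hit.abs.add (integrable_const _)) fun x => ?_
    have := abs_add_le (ψ x - t) t
    simpa using this
  linarith

/-! ### Light cells, barycenters and heavy cells -/

/-- The index of the cell containing `x`. -/
noncomputable def fl {F : Type*} [NormedAddCommGroup F] [NormedSpace ℝ F] {j : ℕ}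
    (ψ : Fin j → F →L[ℝ] ℝ) (x : F) : Fin j → ℤ := fun m => ⌊ψ m x⌋

lemma mem_cell {F : Type*} [NormedAddCommGroup F] [NormedSpace ℝ F] {j : ℕ}
    {ψ : Fin j → F →L[ℝ] ℝ} {x : F} {n : Fin j → ℤ} : x ∈ cell ψ n ↔ fl ψ x = n := by
  rw [funext_iff]; rfl

lemma measurableSet_fl {F : Type*} [NormedAddCommGroup F] [NormedSpace ℝ F]
    [MeasurableSpace F] [BorelSpace F] {j : ℕ} (ψ : Fin j → F →L[ℝ] ℝ) (S : Set (Fin j → ℤ)) :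
    MeasurableSet (fl ψ ⁻¹' S) := by
  have h : Measurable (fl ψ) := measurable_pi_lambda _ fun m =>
    Int.measurable_floor.comp (ψ m).continuous.measurable
  exact h S.to_countable.measurableSet

lemma fl_preimage {F : Type*} [NormedAddCommGroup F] [NormedSpace ℝ F] {j : ℕ}
    (ψ : Fin j → F →L[ℝ] ℝ) (S : Set (Fin j → ℤ)) : fl ψ ⁻¹' S = ⋃ n ∈ S, cell ψ n := by
  ext x; simp [mem_cell]

lemma lintegral_fl {F : Type*} [NormedAddCommGroup F] [NormedSpace ℝ F]
    [MeasurableSpace F] [BorelSpace F] {ν : Measure F} {j : ℕ} (ψ : Fin j → F →L[ℝ] ℝ)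
    (S : Set (Fin j → ℤ)) (f : F → ℝ≥0∞) :
    ∫⁻ x in fl ψ ⁻¹' S, f x ∂ν = ∑' n : S, ∫⁻ x in cell ψ n, f x ∂ν := by
  rw [fl_preimage, lintegral_biUnion S.to_countable (fun n _ => measurableSet_cell ψ n)]
  intro a _ b _ hab
  refine Set.disjoint_left.2 fun x hx hy => hab ?_
  rw [← mem_cell.1 hx, ← mem_cell.1 hy]

/-- The base of the exponential bound on the effective number of cells. -/
noncomputable def C5 : ℝ := 2 * Real.exp 6 * cZ

lemma C5_ge_one : 1 ≤ C5 := by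
  have := cZ_ge_one
  have h2 : (1:ℝ) ≤ Real.exp 6 := Real.one_le_exp (by norm_num)
  unfold C5; nlinarith

/-- If `ν` has density at most `e^q` with respect to `μ`, cells of `ν`-mass at most `η²` have
total mass at most `η C5^k`: for such a cell `ν ≤ η √ν ≤ η e^k √μ`, and `cell_sum` bounds the sum
of the `√μ`. -/
lemma light_mass {F : Type*} [NormedAddCommGroup F] [NormedSpace ℝ F]
    [MeasurableSpace F] [BorelSpace F] {μ ν : Measure F} [IsProbabilityMeasure μ]
    [IsProbabilityMeasure ν] (h : LCM μ) {q : ℝ} (hνμ : ν ≤ ENNReal.ofReal (Real.exp q) • μ)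
    {j k : ℕ} (hk : 1 ≤ k) (hqk : q ≤ k) (hjk : j ≤ k)
    (ψ : Fin j → F →L[ℝ] ℝ) (hψ : ∀ m, ∫ x, |ψ m x| ∂μ ≤ 1) {η : ℝ} (hη : 0 ≤ η)
    (S : Set (Fin j → ℤ)) (hS : ∀ n ∈ S, ν.real (cell ψ n) ≤ η ^ 2) :
    ν.real (fl ψ ⁻¹' S) ≤ η * C5 ^ k := by
  have hC5 : 0 ≤ C5 := zero_le_one.trans C5_ge_one
  have hcZ := cZ_ge_one
  refine ENNReal.toReal_le_of_le_ofReal (by positivity) ?_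
  have h1 : ν (fl ψ ⁻¹' S) = ∑' n : S, ν (cell ψ n) := by
    have := lintegral_fl (ν := ν) ψ S (fun _ => 1)
    simpa using this
  have h2 : ∀ n ∈ S, ν.real (cell ψ n) ≤
      η * Real.exp k * μ.real (cell ψ n) ^ (1 / 2 : ℝ) := by
    intro n hn
    have h3 : ν.real (cell ψ n) ≤ Real.exp q * μ.real (cell ψ n) := by
      have := ENNReal.toReal_mono (by rw [Measure.smul_apply, smul_eq_mul]; finiteness)
        (hνμ (cell ψ n))
      simpa [Real.exp_nonneg, Measure.real] using this
    have hm : 0 ≤ μ.real (cell ψ n) := measureReal_nonneg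
    have hv : 0 ≤ ν.real (cell ψ n) := measureReal_nonneg
    have h4 : ν.real (cell ψ n) ^ (1 / 2 : ℝ) ≤ Real.exp k * μ.real (cell ψ n) ^ (1 / 2 : ℝ) := by
      calc _ ≤ (Real.exp q * μ.real (cell ψ n)) ^ (1 / 2 : ℝ) := Real.rpow_le_rpow hv h3 (by norm_num)
        _ = Real.exp (q * (1/2)) * μ.real (cell ψ n) ^ (1 / 2 : ℝ) := by
            rw [Real.mul_rpow (by positivity) hm, Real.exp_mul]
        _ ≤ _ := by
            gcongr
            have : (1:ℝ) ≤ k := by exact_mod_cast hk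
            linarith
    have h5 : ν.real (cell ψ n) ^ (1 / 2 : ℝ) ≤ η := by
      calc _ ≤ (η ^ 2) ^ (1 / 2 : ℝ) := Real.rpow_le_rpow hv (hS n hn) (by norm_num)
        _ = η := by rw [← Real.sqrt_eq_rpow, Real.sqrt_sq hη]
    calc ν.real (cell ψ n) = ν.real (cell ψ n) ^ (1 / 2 : ℝ) * ν.real (cell ψ n) ^ (1 / 2 : ℝ) := by
          rw [← Real.rpow_add_of_nonneg hv (by norm_num) (by norm_num)]; norm_num
      _ ≤ η * (Real.exp k * μ.real (cell ψ n) ^ (1 / 2 : ℝ)) := by gcongr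
      _ = _ := by ring
  rw [h1]
  calc ∑' n : S, ν (cell ψ n) ≤ ∑' n : S, ENNReal.ofReal (η * Real.exp k) *
        ENNReal.ofReal (μ.real (cell ψ n) ^ (1 / 2 : ℝ)) := by
        refine ENNReal.tsum_le_tsum fun n => ?_
        rw [← ofReal_measureReal, ← ENNReal.ofReal_mul (by positivity)]
        exact ENNReal.ofReal_le_ofReal (h2 n n.2)
    _ = ENNReal.ofReal (η * Real.exp k) *
        ∑' n : S, ENNReal.ofReal (μ.real (cell ψ n) ^ (1 / 2 : ℝ)) := ENNReal.tsum_mul_left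
    _ ≤ ENNReal.ofReal (η * Real.exp k) * ENNReal.ofReal (2 * Real.exp (3 * j + 2) * cZ ^ j) := by
        gcongr
        exact (ENNReal.tsum_comp_le_tsum_of_injective Subtype.val_injective _).trans
          (cell_sum h ψ hψ)
    _ ≤ _ := by
        rw [← ENNReal.ofReal_mul (by positivity)]
        apply ENNReal.ofReal_le_ofReal
        have hk' : (1:ℝ) ≤ k := by exact_mod_cast hk
        have hj' : (j:ℝ) ≤ k := by exact_mod_cast hjk
        have e1 : C5 ^ k = 2 ^ k * Real.exp (k * 6) * cZ ^ k := by
          rw [C5, mul_pow, mul_pow, Real.exp_nat_mul]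
        have e2 : (2:ℝ) ≤ 2 ^ k := by
          calc (2:ℝ) = 2 ^ 1 := by norm_num
            _ ≤ _ := pow_le_pow_right₀ (by norm_num) hk
        have e3 : cZ ^ j ≤ cZ ^ k := pow_le_pow_right₀ hcZ hjk
        have e4 : Real.exp k * Real.exp (3 * j + 2) ≤ Real.exp (k * 6) := by
          rw [← Real.exp_add]; exact Real.exp_le_exp.2 (by linarith)
        rw [e1]
        calc _ = η * (2 * (Real.exp k * Real.exp (3 * j + 2)) * cZ ^ j) := by ring
          _ ≤ _ := by gcongr

lemma integral_abs_rpow_le {F : Type*} [NormedAddCommGroup F] [NormedSpace ℝ F]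
    [MeasurableSpace F] [BorelSpace F] {μ ν : Measure F} [IsProbabilityMeasure μ]
    (h : LCM μ) {q : ℝ} (hq : 1 ≤ q)
    (hνμ : ν ≤ ENNReal.ofReal (Real.exp q) • μ) (φ : F →L[ℝ] ℝ) :
    ∫ x, |φ x| ^ q ∂ν ≤ Real.exp q * ∫ x, |φ x| ^ q ∂μ := by
  have hi := h.integrable_clm_rpow φ hq
  calc _ ≤ ∫ x, |φ x| ^ q ∂(ENNReal.ofReal (Real.exp q) • μ) :=
        integral_mono_measure hνμ (Filter.Eventually.of_forall fun x => by positivity)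
          (hi.smul_measure ENNReal.ofReal_ne_top)
    _ = _ := by
        rw [integral_smul_measure, ENNReal.toReal_ofReal (Real.exp_nonneg _), smul_eq_mul]

/-- The barycenter of the part of `ν` living on `Q`, for `Q` of positive mass. -/
noncomputable def bary {F : Type*} [NormedAddCommGroup F] [NormedSpace ℝ F]
    [MeasurableSpace F] (ν : Measure F) (Q : Set F) : F := (ν.real Q)⁻¹ • ∫ x in Q, x ∂ν

lemma clm_bary {F : Type*} [NormedAddCommGroup F] [NormedSpace ℝ F] [FiniteDimensional ℝ F]
    [MeasurableSpace F] [BorelSpace F] {ν : Measure F} [IsProbabilityMeasure ν] (h : LCM ν)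
    (Q : Set F) (φ : F →L[ℝ] ℝ) :
    φ (bary ν Q) = (ν.real Q)⁻¹ * ∫ x in Q, φ x ∂ν := by
  have : CompleteSpace F := FiniteDimensional.complete ℝ F
  have hi : Integrable (fun x : F => x) ν := by
    have := h.integrable_norm_rpow le_rfl
    simp only [Real.rpow_one] at this
    exact (integrable_norm_iff measurable_id.aestronglyMeasurable).1 this
  rw [bary, map_smul, smul_eq_mul, ContinuousLinearMap.integral_comp_comm φ hi.integrableOn]

/-- The barycenter of a set of mass at least `ε^q` has norm `O(B / ε)`: passing from `μ` to `ν`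
costs only a factor `e` on the weak `q`-norm, and passing from `ν` to `Q` only a factor `1/ε`. -/
lemma bary_bound {F : Type*} [NormedAddCommGroup F] [NormedSpace ℝ F] [FiniteDimensional ℝ F]
    [MeasurableSpace F] [BorelSpace F] {μ ν : Measure F} [IsProbabilityMeasure μ]
    [IsProbabilityMeasure ν] (hμ : LCM μ) (hν : LCM ν) {q B : ℝ} (hq : 1 ≤ q) (hB : 0 < B)
    (hνμ : ν ≤ ENNReal.ofReal (Real.exp q) • μ)
    (h1 : ∀ φ : F →L[ℝ] ℝ, ‖φ‖ ≤ 1 → ∫ x, |φ x| ^ q ∂μ ≤ B ^ q)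
    {Q : Set F} {ε : ℝ} (hε : 0 < ε) (hQ : ε ^ q ≤ ν.real Q) :
    ‖bary ν Q‖ ≤ 2 * (Real.exp 1 / ε * B) := by
  have hm0 : 0 < ν.real Q := lt_of_lt_of_le (by positivity) hQ
  have hq0 : 0 < q := by linarith
  obtain ⟨φ, hφ1, hφ2⟩ := exists_dual_vector'' ℝ (bary ν Q)
  set s := Real.exp 1 / ε * B with hs
  have hs0 : 0 < s := by positivity
  have hi := hν.integrable_clm φ
  have hiq := hν.integrable_clm_rpow φ hq
  have hq2 : ∫ x, |φ x| ^ q ∂ν ≤ Real.exp q * B ^ q :=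
    (integral_abs_rpow_le hμ hq hνμ φ).trans (by gcongr; exact h1 φ hφ1)
  have hsq : s ^ q * ε ^ q = Real.exp q * B ^ q := by
    rw [← Real.mul_rpow hs0.le hε.le, hs,
      show Real.exp 1 / ε * B * ε = Real.exp 1 * B by field_simp,
      Real.mul_rpow (Real.exp_nonneg _) hB.le, ← Real.exp_mul, one_mul]
  have hpt : ∀ x, φ x ≤ s + s / s ^ q * |φ x| ^ q := by
    intro x
    have h0 : 0 ≤ s / s ^ q * |φ x| ^ q := by positivity
    rcases le_total |φ x| s with hx | hx
    · linarith [le_abs_self (φ x)]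
    · have h3 : |φ x| / s ≤ (|φ x| / s) ^ q := by
        have : 1 ≤ |φ x| / s := (one_le_div hs0).2 hx
        calc |φ x| / s = (|φ x| / s) ^ (1:ℝ) := (Real.rpow_one _).symm
          _ ≤ _ := Real.rpow_le_rpow_of_exponent_le this hq
      rw [Real.div_rpow (abs_nonneg _) hs0.le, div_le_iff₀ hs0] at h3
      have h4 : s / s ^ q * |φ x| ^ q = |φ x| ^ q / s ^ q * s := by ring
      linarith [le_abs_self (φ x)]
  have hmain : ∫ x in Q, φ x ∂ν ≤ 2 * s * ν.real Q := by
    calc _ ≤ ∫ x in Q, (s + s / s ^ q * |φ x| ^ q) ∂ν :=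
          integral_mono hi.integrableOn
            (((integrable_const s).add (hiq.const_mul _)).integrableOn) hpt
      _ = s * ν.real Q + s / s ^ q * ∫ x in Q, |φ x| ^ q ∂ν := by
          rw [integral_add (integrable_const s) ((hiq.const_mul _).integrableOn),
            setIntegral_const, integral_const_mul, smul_eq_mul, mul_comm (ν.real _) s]
      _ ≤ s * ν.real Q + s / s ^ q * (s ^ q * ε ^ q) := by
          rw [hsq]
          gcongr
          exact (setIntegral_le_integral hiq
            (Filter.Eventually.of_forall fun x => by positivity)).trans hq2
      _ = s * ν.real Q + s * ε ^ q := by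
          have : s ^ q ≠ 0 := by positivity
          field_simp
      _ ≤ s * ν.real Q + s * ν.real Q := by gcongr
      _ = _ := by ring
  have h5 := clm_bary hν Q φ
  have h6 : ‖bary ν Q‖ = (ν.real Q)⁻¹ * ∫ x in Q, φ x ∂ν := by
    rw [← h5, hφ2]; simp
  rw [h6, inv_mul_le_iff₀ hm0]
  linarith

/-- A Paley–Zygmund argument: the cells on which the mean of `|T|` is at least half of its global
mean have a total mass bounded below by an absolute constant. -/
lemma heavy_mass {F : Type*} [NormedAddCommGroup F] [NormedSpace ℝ F]
    [MeasurableSpace F] [BorelSpace F] {ν : Measure F} [IsProbabilityMeasure ν] (h : LCM ν)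
    {j : ℕ} (ψ : Fin j → F →L[ℝ] ℝ) (T : F →L[ℝ] ℝ) {b : ℝ} (hb : 0 < b)
    (hbT : ∫ x, |T x| ∂ν = b) :
    1 / (16 * (20 * Real.exp 5) ^ 2) ≤
      ν.real (fl ψ ⁻¹' {n | b / 2 * ν.real (cell ψ n) ≤ ∫ x in cell ψ n, |T x| ∂ν}) := by
  set S := {n | b / 2 * ν.real (cell ψ n) ≤ ∫ x in cell ψ n, |T x| ∂ν} with hS
  have hi : Integrable (fun x => |T x|) ν := (h.integrable_clm T).abs
  have hi2 : Integrable (fun x => |T x| ^ (2:ℝ)) ν := h.integrable_clm_rpow T (by norm_num)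
  have hmS := measurableSet_fl ψ S
  set c2 : ℝ := (20 * Real.exp 5) ^ 2 with hc2
  have hc2p : 0 < c2 := by positivity
  have h2 : ∫ x, |T x| ^ (2:ℝ) ∂ν ≤ c2 * b ^ 2 := by
    have := h.moment_clm T (q := 1) (s := 2) (A := b) le_rfl (by norm_num) hb (by simp [hbT])
    refine this.trans (le_of_eq ?_)
    rw [hc2]; norm_num; ring
  have hcompl : ∫ x in (fl ψ ⁻¹' S)ᶜ, |T x| ∂ν ≤ b / 2 := by
    have h3 : ∫⁻ x in fl ψ ⁻¹' Sᶜ, ENNReal.ofReal |T x| ∂ν ≤ ENNReal.ofReal (b / 2) := by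
      rw [lintegral_fl]
      calc _ ≤ ∑' n : (Sᶜ : Set _), ENNReal.ofReal (b / 2) * ∫⁻ x in cell ψ n, 1 ∂ν := by
            refine ENNReal.tsum_le_tsum fun n => ?_
            rw [← ofReal_integral_eq_lintegral_ofReal hi.integrableOn
              (Filter.Eventually.of_forall fun x => abs_nonneg _)]
            rw [setLIntegral_one, ← ofReal_measureReal, ← ENNReal.ofReal_mul (by positivity)]
            apply ENNReal.ofReal_le_ofReal
            exact (not_le.1 (show ¬ (b / 2 * ν.real (cell ψ n) ≤ ∫ x in cell ψ n, |T x| ∂ν)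
              from n.2)).le
        _ = ENNReal.ofReal (b / 2) * ∫⁻ x in fl ψ ⁻¹' Sᶜ, 1 ∂ν := by
            rw [ENNReal.tsum_mul_left, lintegral_fl]
        _ ≤ ENNReal.ofReal (b / 2) * 1 := by
            gcongr
            rw [setLIntegral_one]; exact prob_le_one
        _ = _ := mul_one _
    rw [← ofReal_integral_eq_lintegral_ofReal hi.integrableOn
      (Filter.Eventually.of_forall fun x => abs_nonneg _)] at h3
    exact (ENNReal.ofReal_le_ofReal_iff (by positivity)).1 h3
  have hsum := integral_add_compl hmS hi
  set t := 4 * c2 * b with ht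
  have ht0 : 0 < t := by positivity
  have hS2 : ∫ x in fl ψ ⁻¹' S, |T x| ∂ν ≤ t * ν.real (fl ψ ⁻¹' S) + b / 4 := by
    calc _ ≤ ∫ x in fl ψ ⁻¹' S, (t + t⁻¹ * |T x| ^ (2:ℝ)) ∂ν := by
          refine integral_mono hi.integrableOn
            (((integrable_const t).add (hi2.const_mul _)).integrableOn) fun x => ?_
          simp only [Real.rpow_two]
          have : t⁻¹ * |T x| ^ 2 + t - |T x| = t⁻¹ * ((|T x| - t / 2) ^ 2 + 3 / 4 * t ^ 2) := by
            field_simp; ring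
          have h4 : 0 ≤ t⁻¹ * ((|T x| - t / 2) ^ 2 + 3 / 4 * t ^ 2) := by positivity
          linarith
      _ = t * ν.real (fl ψ ⁻¹' S) + t⁻¹ * ∫ x in fl ψ ⁻¹' S, |T x| ^ (2:ℝ) ∂ν := by
          rw [integral_add (integrable_const t) ((hi2.const_mul _).integrableOn),
            setIntegral_const, integral_const_mul, smul_eq_mul, mul_comm (ν.real _) t]
      _ ≤ t * ν.real (fl ψ ⁻¹' S) + t⁻¹ * (c2 * b ^ 2) := by
          gcongr
          exact (setIntegral_le_integral hi2 (Filter.Eventually.of_forall fun x => by positivity)).trans h2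
      _ = _ := by
          congr 1; rw [ht]; field_simp
  rw [hbT] at hsum
  have h5 : b / 4 ≤ t * ν.real (fl ψ ⁻¹' S) := by linarith
  rw [div_le_iff₀ (by positivity)]
  have h6 : b * 1 ≤ b * (ν.real (fl ψ ⁻¹' S) * (16 * c2)) := by rw [ht] at h5; linarith
  exact le_of_mul_le_mul_left h6 hb

/-! ### A functional cutting well a fixed proportion of the mass -/

/-- Lower bound for the mass of the cells on which a functional keeps its average size. -/
noncomputable def c1 : ℝ := 1 / (16 * (20 * Real.exp 5) ^ 2)

lemma c1_pos : 0 < c1 := by unfold c1; positivity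

lemma c1_le_one : c1 ≤ 1 := by
  have : (1:ℝ) ≤ Real.exp 5 := Real.one_le_exp (by norm_num)
  unfold c1
  rw [div_le_one (by positivity)]
  nlinarith

/-- The base of the mass threshold under which a cell is neglected. -/
noncomputable def eps0 : ℝ := (c1 / 8 / C5) ^ 4

lemma eps0_pos : 0 < eps0 := by
  have := c1_pos
  have := C5_ge_one
  unfold eps0; positivity

/-- The cell of index `n` is well cut by `φ` when each slab `⌊φ⌋ = t` takes at most a `1/K`
fraction of it. -/
def Good {F : Type*} [NormedAddCommGroup F] [NormedSpace ℝ F] [MeasurableSpace F]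
    (ν : Measure F) {j : ℕ} (ψ : Fin j → F →L[ℝ] ℝ) (φ : F →L[ℝ] ℝ) (K : ℕ)
    (n : Fin j → ℤ) : Prop :=
  ∀ t : ℤ, K * ν.real (cell ψ n ∩ {x | ⌊φ x⌋ = t}) ≤ ν.real (cell ψ n)

/-- If `|T|` is of order `b` on average on a cell while `T` is small at its barycenter, then `T`
spreads over the cell, hence a small multiple of `b` as slab width cuts the cell well. This is the
contrapositive of `floor_spread`. -/
lemma good_of_heavy {F : Type*} [NormedAddCommGroup F] [NormedSpace ℝ F] [FiniteDimensional ℝ F]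
    [MeasurableSpace F] [BorelSpace F] {ν : Measure F} [IsProbabilityMeasure ν] (h : LCM ν)
    {j : ℕ} (ψ : Fin j → F →L[ℝ] ℝ) (T : F →L[ℝ] ℝ) {b : ℝ} (hb : 0 < b) {K : ℕ} (hK : 1 ≤ K)
    (n : Fin j → ℤ) (hm : 0 < ν.real (cell ψ n))
    (hheavy : b / 2 * ν.real (cell ψ n) ≤ ∫ x in cell ψ n, |T x| ∂ν)
    (hbary : |T (bary ν (cell ψ n))| ≤ b / 4) :
    Good ν ψ ((1 / (16 * Lam K) * b)⁻¹ • T) K n := by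
  set l := 1 / (16 * Lam K) * b with hl
  have hLam := Lam_pos hK
  have hl0 : 0 < l := by positivity
  set m := ν.real (cell ψ n) with hmdef
  by_contra hbad
  unfold Good at hbad
  push Not at hbad
  obtain ⟨t, ht⟩ := hbad
  have hi := h.integrable_clm T
  have hA := measurableSet_cell ψ n
  have h1 := floor_spread (ν := ν.restrict (cell ψ n)) (h.restrict hA (convex_cell ψ n))
    (l⁻¹ • T) (by simpa using (hi.integrableOn (s := cell ψ n)).const_mul l⁻¹) hK t (by
      rw [measureReal_restrict_apply MeasurableSet.univ, Set.univ_inter,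
        measureReal_restrict_apply (measurableSet_floor_eq _ _), Set.inter_comm]
      exact ht)
  rw [measureReal_restrict_apply MeasurableSet.univ, Set.univ_inter] at h1
  simp only [smul_apply, smul_eq_mul, abs_mul, integral_const_mul,
    abs_of_pos (inv_pos.2 hl0)] at h1
  have h2 : |∫ x in cell ψ n, T x ∂ν| ≤ b / 4 * m := by
    have e := clm_bary h (cell ψ n) T
    rw [e, abs_mul, abs_of_pos (inv_pos.2 hm), inv_mul_le_iff₀ hm] at hbary
    linarith
  have h3 : ∫ x in cell ψ n, |T x| ∂ν ≤ |∫ x in cell ψ n, T x ∂ν| + l * (2 * Lam K * m) := by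
    have h4 := mul_le_mul_of_nonneg_left h1 hl0.le
    rw [mul_add, mul_inv_cancel_left₀ hl0.ne', mul_inv_cancel_left₀ hl0.ne'] at h4
    exact h4
  have h5 : l * (2 * Lam K * m) = b / 8 * m := by
    rw [hl]; field_simp; norm_num
  have : 0 < b * m := by positivity
  linarith

/-- If the weights `b_i = ∫ |T_i| dν` are large in `ℓ_r`, some rescaled coordinate cuts well a
fixed proportion of the mass. The barycenter `z` of a cell which is not too light satisfies
`∑ |T_i z|^r ≤ ‖z‖^r = O(B)^r`, so, weighting `i` by `b_i^r`, for most `i` one has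
`|T_i z| ≤ b_i / 4`, and `good_of_heavy` applies. -/
lemma one_step {F : Type*} [NormedAddCommGroup F] [NormedSpace ℝ F] [FiniteDimensional ℝ F]
    [MeasurableSpace F] [BorelSpace F] {μ ν : Measure F} [IsProbabilityMeasure μ]
    [IsProbabilityMeasure ν] (hμ : LCM μ) (hν : LCM ν) {q B r : ℝ} (hq : 1 ≤ q) (hB : 0 < B)
    (hr : 1 ≤ r) (hνμ : ν ≤ ENNReal.ofReal (Real.exp q) • μ)
    (h1 : ∀ φ : F →L[ℝ] ℝ, ‖φ‖ ≤ 1 → ∫ x, |φ x| ^ q ∂μ ≤ B ^ q)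
    (T : ℕ → F →L[ℝ] ℝ) (h3 : ∀ x, ∀ s : Finset ℕ, ∑ i ∈ s, |T i x| ^ r ≤ ‖x‖ ^ r)
    {j k : ℕ} (hk : 1 ≤ k) (hqk : q ≤ k) (hkq : k ≤ 2 * q) (hjk : j ≤ k)
    (ψ : Fin j → F →L[ℝ] ℝ) (hψ : ∀ m, ∫ x, |ψ m x| ∂μ ≤ 1) {K : ℕ} (hK : 1 ≤ K)
    (G : Finset ℕ) (hG : ∀ i ∈ G, 0 < ∫ x, |T i x| ∂ν)
    (hW : (8 * Real.exp 1 / eps0 / (c1 / 8) * B) ^ r ≤ ∑ i ∈ G, (∫ x, |T i x| ∂ν) ^ r) :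
    ∃ i ∈ G, c1 / 2 ≤ ν.real (fl ψ ⁻¹'
      {n | Good ν ψ ((1 / (16 * Lam K) * ∫ x, |T i x| ∂ν)⁻¹ • T i) K n}) := by
  have hc1 := c1_pos
  have hc1' := c1_le_one
  have hC5 := C5_ge_one
  have he0 := eps0_pos
  have hq0 : 0 < q := by linarith
  have hr0 : 0 < r := by linarith
  set δ := c1 / 8 with hδ
  have hδ0 : 0 < δ := by positivity
  have hδ1 : δ ≤ 1 := by linarith
  set b : ℕ → ℝ := fun i => ∫ x, |T i x| ∂ν with hb
  set W := ∑ i ∈ G, b i ^ r with hWdef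
  set η := (δ / C5) ^ k with hη
  have hx0 : 0 < δ / C5 := by positivity
  have hx1 : δ / C5 ≤ 1 := by rw [div_le_one (by linarith)]; linarith
  have hη0 : 0 < η := by positivity
  set L : Set (Fin j → ℤ) := {n | ν.real (cell ψ n) ≤ η ^ 2} with hL
  have hLmass : ν.real (fl ψ ⁻¹' L) ≤ δ := by
    refine (light_mass hμ hνμ hk hqk hjk ψ hψ hη0.le L fun n hn => hn).trans ?_
    rw [hη, ← mul_pow, div_mul_cancel₀ _ (by linarith)]
    exact pow_le_of_le_one hδ0.le hδ1 (by omega)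
  have hcellmass : ∀ n ∉ L, eps0 ^ q ≤ ν.real (cell ψ n) := by
    intro n hn
    have h4 : η ^ 2 < ν.real (cell ψ n) := not_le.1 hn
    refine le_trans ?_ h4.le
    rw [hη, eps0, ← Real.rpow_natCast _ 4, ← Real.rpow_mul hx0.le, ← pow_mul, ← Real.rpow_natCast _ (k * 2)]
    apply Real.rpow_le_rpow_of_exponent_ge hx0 hx1
    push_cast; linarith
  -- cells, not too light, at whose barycenter `T i` is not small
  set D : ℕ → Set (Fin j → ℤ) := fun i => {n | n ∉ L ∧ b i / 4 < |T i (bary ν (cell ψ n))|} with hD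
  have hpt : ∀ x, ∑ i ∈ G, b i ^ r * (fl ψ ⁻¹' D i).indicator (fun _ => (1:ℝ)) x ≤ δ * W := by
    intro x
    by_cases hn : fl ψ x ∈ L
    · have : ∀ i ∈ G, b i ^ r * (fl ψ ⁻¹' D i).indicator (fun _ => (1:ℝ)) x = 0 := by
        intro i _
        rw [Set.indicator_of_notMem (fun hx => hx.1 hn), mul_zero]
      rw [Finset.sum_eq_zero this]
      have : 0 ≤ W := Finset.sum_nonneg fun i hi => Real.rpow_nonneg (hG i hi).le _
      positivity
    · set z := bary ν (cell ψ (fl ψ x)) with hz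
      have hzb : ‖z‖ ≤ 2 * (Real.exp 1 / eps0 * B) :=
        bary_bound hμ hν hq hB hνμ h1 he0 (hcellmass _ hn)
      calc _ ≤ ∑ i ∈ G, (4:ℝ) ^ r * |T i z| ^ r := by
            refine Finset.sum_le_sum fun i hi => ?_
            by_cases hx : x ∈ fl ψ ⁻¹' D i
            · rw [Set.indicator_of_mem hx, mul_one, ← Real.mul_rpow (by norm_num) (abs_nonneg _)]
              have : b i / 4 < |T i z| := hx.2
              exact Real.rpow_le_rpow (hG i hi).le (by linarith) hr0.le
            · rw [Set.indicator_of_notMem hx, mul_zero]; positivity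
        _ ≤ 4 ^ r * ‖z‖ ^ r := by
            rw [← Finset.mul_sum]; gcongr; exact h3 z G
        _ ≤ (δ * (8 * Real.exp 1 / eps0 / δ * B)) ^ r := by
            rw [← Real.mul_rpow (by norm_num) (norm_nonneg _)]
            apply Real.rpow_le_rpow (by positivity) _ hr0.le
            rw [show δ * (8 * Real.exp 1 / eps0 / δ * B) = 4 * (2 * (Real.exp 1 / eps0 * B)) by
              field_simp; norm_num]
            gcongr
        _ = δ ^ r * (8 * Real.exp 1 / eps0 / δ * B) ^ r :=
            Real.mul_rpow hδ0.le (by positivity)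
        _ ≤ δ * W := by
            gcongr
            calc δ ^ r ≤ δ ^ (1:ℝ) := Real.rpow_le_rpow_of_exponent_ge hδ0 hδ1 hr
              _ = δ := Real.rpow_one _
  have hsum : ∑ i ∈ G, b i ^ r * ν.real (fl ψ ⁻¹' D i) ≤ δ * W := by
    have e : ∑ i ∈ G, b i ^ r * ν.real (fl ψ ⁻¹' D i) =
        ∫ x, ∑ i ∈ G, b i ^ r * (fl ψ ⁻¹' D i).indicator (fun _ => (1:ℝ)) x ∂ν := by
      rw [integral_finsetSum _ fun i _ =>
        ((integrable_const (1:ℝ)).indicator (measurableSet_fl ψ (D i))).const_mul _]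
      refine Finset.sum_congr rfl fun i _ => ?_
      rw [integral_const_mul, integral_indicator_const _ (measurableSet_fl ψ (D i))]
      simp
    rw [e]
    calc _ ≤ ∫ _, δ * W ∂ν := integral_mono
          (integrable_finsetSum _ fun i _ =>
            ((integrable_const (1:ℝ)).indicator (measurableSet_fl ψ (D i))).const_mul _)
          (integrable_const _) hpt
      _ = _ := by simp
  have hW0 : 0 < W := lt_of_lt_of_le (by positivity) hW
  by_contra hcon
  push Not at hcon
  have hDbig : ∀ i ∈ G, 3 / 8 * c1 ≤ ν.real (fl ψ ⁻¹' D i) := by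
    intro i hi
    have h5 := heavy_mass hν ψ (T i) (hG i hi) rfl
    rw [← c1] at h5
    have h6 := hcon i hi
    set S : Set (Fin j → ℤ) := {n | b i / 2 * ν.real (cell ψ n) ≤ ∫ x in cell ψ n, |T i x| ∂ν}
    set Gd : Set (Fin j → ℤ) := {n | Good ν ψ ((1 / (16 * Lam K) * b i)⁻¹ • T i) K n}
    have hsub : fl ψ ⁻¹' S ⊆ (fl ψ ⁻¹' Gd ∪ fl ψ ⁻¹' L) ∪ fl ψ ⁻¹' D i := by
      intro x hx
      by_cases hxL : fl ψ x ∈ L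
      · exact Or.inl (Or.inr hxL)
      by_cases hxD : b i / 4 < |T i (bary ν (cell ψ (fl ψ x)))|
      · exact Or.inr ⟨hxL, hxD⟩
      · refine Or.inl (Or.inl ?_)
        exact good_of_heavy hν ψ (T i) (hG i hi) hK _
          (lt_of_lt_of_le (by positivity) (hcellmass _ hxL)) hx (not_lt.1 hxD)
    have h7 : ν.real (fl ψ ⁻¹' S) ≤
        ν.real (fl ψ ⁻¹' Gd) + ν.real (fl ψ ⁻¹' L) + ν.real (fl ψ ⁻¹' D i) :=
      (measureReal_mono hsub).trans ((measureReal_union_le _ _).trans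
        (by gcongr; exact measureReal_union_le _ _))
    have h8 : c1 ≤ ν.real (fl ψ ⁻¹' S) := h5
    have h9 : ν.real (fl ψ ⁻¹' Gd) < c1 / 2 := h6
    linarith
  have hfin : W * (3 / 8 * c1) ≤ δ * W := by
    refine le_trans ?_ hsum
    rw [hWdef, Finset.sum_mul]
    exact Finset.sum_le_sum fun i hi =>
      mul_le_mul_of_nonneg_left (hDbig i hi) (Real.rpow_nonneg (hG i hi).le _)
  have : 0 < W * c1 := by positivity
  rw [hδ] at hfin
  linarith

/-! ### Stability of the first moments under a change of density -/

lemma integrable_fl {F : Type*} [NormedAddCommGroup F] [NormedSpace ℝ F]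
    [MeasurableSpace F] [BorelSpace F] {ν : Measure F} [IsProbabilityMeasure ν]
    {j : ℕ} (ψ : Fin j → F →L[ℝ] ℝ) (g : (Fin j → ℤ) → ℕ) (hg : ∀ n, g n ≤ j) :
    Integrable (fun x => (g (fl ψ x) : ℝ)) ν := by
  have h : Measurable (fl ψ) := measurable_pi_lambda _ fun m =>
    Int.measurable_floor.comp (ψ m).continuous.measurable
  refine Integrable.of_bound (C := j)
    ((measurable_of_countable fun n => (g n : ℝ)).comp h).aestronglyMeasurable
    (Filter.Eventually.of_forall fun x => ?_)
  rw [Real.norm_of_nonneg (by positivity)]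
  exact_mod_cast hg _

lemma cell_cons {F : Type*} [NormedAddCommGroup F] [NormedSpace ℝ F] {j : ℕ}
    (ψ : Fin j → F →L[ℝ] ℝ) (φ : F →L[ℝ] ℝ) (n : Fin (j + 1) → ℤ) :
    cell (Fin.cons φ ψ : Fin (j + 1) → F →L[ℝ] ℝ) n =
      cell ψ (Fin.tail n) ∩ {x | ⌊φ x⌋ = n 0} := by
  ext x
  simp [cell, Fin.forall_fin_succ, Fin.tail, and_comm]

/-- After `j` steps there are `j` functionals of `μ`-mean at most `1`, and `g n` counts the steps
at which the cell containing the cell `n` was well cut. Each good cut divides the mass by `K`, and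
a fixed proportion of the mass is well cut at each step. -/
lemma iterate {F : Type*} [NormedAddCommGroup F] [NormedSpace ℝ F] [FiniteDimensional ℝ F]
    [MeasurableSpace F] [BorelSpace F] {μ ν : Measure F} [IsProbabilityMeasure μ]
    [IsProbabilityMeasure ν] (hμ : LCM μ) (hν : LCM ν) {q B r : ℝ} (hq : 1 ≤ q) (hB : 0 < B)
    (hr : 1 ≤ r) (hνμ : ν ≤ ENNReal.ofReal (Real.exp q) • μ)
    (h1 : ∀ φ : F →L[ℝ] ℝ, ‖φ‖ ≤ 1 → ∫ x, |φ x| ^ q ∂μ ≤ B ^ q)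
    (T : ℕ → F →L[ℝ] ℝ) (h3 : ∀ x, ∀ s : Finset ℕ, ∑ i ∈ s, |T i x| ^ r ≤ ‖x‖ ^ r)
    {k : ℕ} (hk : 1 ≤ k) (hqk : q ≤ k) (hkq : k ≤ 2 * q) {K : ℕ} (hK : 1 ≤ K)
    (G : Finset ℕ) (hG : ∀ i ∈ G, 0 < ∫ x, |T i x| ∂ν)
    (hGμ : ∀ i ∈ G, ∫ x, |T i x| ∂μ ≤ 1 / (16 * Lam K) * ∫ x, |T i x| ∂ν)
    (hW : (8 * Real.exp 1 / eps0 / (c1 / 8) * B) ^ r ≤ ∑ i ∈ G, (∫ x, |T i x| ∂ν) ^ r)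
    (j : ℕ) (hjk : j ≤ k) :
    ∃ ψ : Fin j → F →L[ℝ] ℝ, (∀ m, ∫ x, |ψ m x| ∂μ ≤ 1) ∧ ∃ g : (Fin j → ℤ) → ℕ,
      (∀ n, g n ≤ j) ∧ (∀ n, (K:ℝ) ^ g n * ν.real (cell ψ n) ≤ 1) ∧
        c1 / 2 * j ≤ ∫ x, (g (fl ψ x) : ℝ) ∂ν := by
  induction j with
  | zero =>
    refine ⟨fun _ => 0, fun m => m.elim0, fun _ => 0, by simp, fun n => ?_, by simp⟩
    simp
  | succ j ih =>
    obtain ⟨ψ, hψ, g, hg1, hg2, hg3⟩ := ih (by omega)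
    obtain ⟨i, hiG, hi⟩ := one_step hμ hν hq hB hr hνμ h1 T h3 hk hqk hkq (by omega : j ≤ k) ψ hψ
      hK G hG hW
    set l := 1 / (16 * Lam K) * ∫ x, |T i x| ∂ν with hl
    have hl0 : 0 < l := by have := hG i hiG; have := Lam_pos hK; positivity
    set φ := l⁻¹ • T i with hφ
    set A : Set (Fin j → ℤ) := {n | Good ν ψ φ K n} with hA
    have hK0 : (0:ℝ) < K := by exact_mod_cast hK
    refine ⟨Fin.cons φ ψ, ?_, fun n => g (Fin.tail n) + if Good ν ψ φ K (Fin.tail n) then 1 else 0,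
      ?_, ?_, ?_⟩
    · intro m
      refine Fin.cases ?_ (fun m => ?_) m
      · simp only [Fin.cons_zero, hφ, smul_apply, smul_eq_mul, abs_mul, integral_const_mul,
          abs_of_pos (inv_pos.2 hl0)]
        rw [inv_mul_le_iff₀ hl0, mul_one]
        exact hGμ i hiG
      · simpa using hψ m
    · intro n
      have := hg1 (Fin.tail n)
      dsimp only
      split_ifs <;> omega
    · intro n
      rw [cell_cons]
      have h4 := hg2 (Fin.tail n)
      dsimp only
      split_ifs with hgood
      · rw [pow_succ, mul_assoc]
        exact le_trans (by gcongr; exact hgood _) h4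
      · rw [add_zero]
        exact le_trans (mul_le_mul_of_nonneg_left (measureReal_mono Set.inter_subset_left)
          (by positivity)) h4
    · have e : ∀ x, ((g (Fin.tail (fl (Fin.cons φ ψ : Fin (j + 1) → F →L[ℝ] ℝ) x)) +
          if Good ν ψ φ K (Fin.tail (fl (Fin.cons φ ψ : Fin (j + 1) → F →L[ℝ] ℝ) x)) then 1 else 0 :
            ℕ) : ℝ) = g (fl ψ x) + (fl ψ ⁻¹' A).indicator (fun _ => (1:ℝ)) x := by
        intro x
        have e2 : Fin.tail (fl (Fin.cons φ ψ : Fin (j + 1) → F →L[ℝ] ℝ) x) = fl ψ x := by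
          ext m; simp [Fin.tail, fl]
        rw [e2, Set.indicator_apply]
        simp [hA]
      simp only [e]
      rw [integral_add (integrable_fl ψ g hg1)
        ((integrable_const (1:ℝ)).indicator (measurableSet_fl ψ A)),
        integral_indicator_const _ (measurableSet_fl ψ A)]
      push_cast
      simp only [smul_eq_mul, mul_one]
      linarith

lemma exists_K : ∃ K : ℕ, 1 ≤ K ∧ C5 / (K:ℝ) ^ (c1 / 8) < c1 / 4 := by
  have hc1 := c1_pos
  have h1 : Filter.Tendsto (fun K : ℕ => C5 / (K:ℝ) ^ (c1 / 8)) Filter.atTop (nhds 0) :=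
    Filter.Tendsto.const_div_atTop
      ((tendsto_rpow_atTop (by positivity)).comp tendsto_natCast_atTop_atTop) _
  obtain ⟨K, h2, h3⟩ := ((h1.eventually_lt_const (by positivity : (0:ℝ) < c1 / 4)).and
    (Filter.eventually_ge_atTop 1)).exists
  exact ⟨K, h3, h2⟩

/-- The number of pieces into which a well cut cell is split, large enough to beat the exponential
number of cells. -/
noncomputable def K0 : ℕ := exists_K.choose

lemma K0_ge : 1 ≤ K0 := exists_K.choose_spec.1

lemma K0_spec : C5 / (K0:ℝ) ^ (c1 / 8) < c1 / 4 := exists_K.choose_spec.2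

/-- After `k = ⌈q⌉` steps of `iterate`, a fixed proportion of `ν` sits in cells of mass at most
`K0^{-ck}`, which contradicts `light_mass` for `K0` large. -/
lemma no_large {F : Type*} [NormedAddCommGroup F] [NormedSpace ℝ F] [FiniteDimensional ℝ F]
    [MeasurableSpace F] [BorelSpace F] {μ ν : Measure F} [IsProbabilityMeasure μ]
    [IsProbabilityMeasure ν] (hμ : LCM μ) (hν : LCM ν) {q B r : ℝ} (hq : 1 ≤ q) (hB : 0 < B)
    (hr : 1 ≤ r) (hνμ : ν ≤ ENNReal.ofReal (Real.exp q) • μ)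
    (h1 : ∀ φ : F →L[ℝ] ℝ, ‖φ‖ ≤ 1 → ∫ x, |φ x| ^ q ∂μ ≤ B ^ q)
    (T : ℕ → F →L[ℝ] ℝ) (h3 : ∀ x, ∀ s : Finset ℕ, ∑ i ∈ s, |T i x| ^ r ≤ ‖x‖ ^ r)
    (G : Finset ℕ) (hG : ∀ i ∈ G, 0 < ∫ x, |T i x| ∂ν)
    (hGμ : ∀ i ∈ G, ∫ x, |T i x| ∂μ ≤ 1 / (16 * Lam K0) * ∫ x, |T i x| ∂ν) :
    ∑ i ∈ G, (∫ x, |T i x| ∂ν) ^ r < (8 * Real.exp 1 / eps0 / (c1 / 8) * B) ^ r := by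
  by_contra hW
  rw [not_lt] at hW
  have hc1 := c1_pos
  have hc1' := c1_le_one
  have hC5 := C5_ge_one
  set k := ⌈q⌉₊ with hkdef
  have hqk : q ≤ k := Nat.le_ceil q
  have hk : 1 ≤ k := by
    have : (1:ℝ) ≤ k := hq.trans hqk
    exact_mod_cast this
  have hkq : (k:ℝ) ≤ 2 * q := by
    have := Nat.ceil_lt_add_one (show 0 ≤ q by linarith)
    linarith
  have hk0 : (0:ℝ) < k := by exact_mod_cast hk
  have hK0 : (0:ℝ) < K0 := by exact_mod_cast K0_ge
  have hK1 : (1:ℝ) ≤ K0 := by exact_mod_cast K0_ge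
  obtain ⟨ψ, hψ, g, hg1, hg2, hg3⟩ := iterate hμ hν hq hB hr hνμ h1 T h3 hk hqk hkq K0_ge G hG hGμ
    hW k le_rfl
  set A : Set (Fin k → ℤ) := {n | c1 / 4 * k ≤ g n} with hA
  set η : ℝ := ((K0:ℝ) ^ (-(c1 / 8))) ^ k with hη
  have hlight := light_mass hμ hνμ hk hqk le_rfl ψ hψ (η := η) (by positivity) A (by
    intro n hn
    have hn' : c1 / 4 * k ≤ g n := hn
    have h4 := hg2 n
    have h5 : η ^ 2 = ((K0:ℝ) ^ (c1 / 4 * k))⁻¹ := by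
      rw [hη, ← pow_mul, ← Real.rpow_natCast, ← Real.rpow_mul hK0.le, ← Real.rpow_neg hK0.le]
      congr 1; push_cast; ring
    rw [h5, ← one_div, le_div_iff₀ (by positivity), mul_comm]
    refine le_trans ?_ h4
    gcongr
    rw [← Real.rpow_natCast]
    exact Real.rpow_le_rpow_of_exponent_le hK1 hn')
  have hAmass : c1 / 4 ≤ ν.real (fl ψ ⁻¹' A) := by
    have h6 : ∫ x, (g (fl ψ x) : ℝ) ∂ν ≤ c1 / 4 * k + k * ν.real (fl ψ ⁻¹' A) := by
      calc _ ≤ ∫ x, (c1 / 4 * k + k * (fl ψ ⁻¹' A).indicator (fun _ => (1:ℝ)) x) ∂ν := by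
            refine integral_mono (integrable_fl ψ g hg1) ((integrable_const _).add
              (((integrable_const (1:ℝ)).indicator (measurableSet_fl ψ A)).const_mul _)) fun x => ?_
            dsimp only
            by_cases hx : x ∈ fl ψ ⁻¹' A
            · rw [Set.indicator_of_mem hx]
              have : (g (fl ψ x) : ℝ) ≤ k := by exact_mod_cast hg1 _
              have : 0 ≤ c1 / 4 * k := by positivity
              linarith
            · rw [Set.indicator_of_notMem hx]
              have : ¬ (c1 / 4 * k ≤ g (fl ψ x)) := hx
              linarith
        _ = _ := by
            rw [integral_add (integrable_const _)
              (((integrable_const (1:ℝ)).indicator (measurableSet_fl ψ A)).const_mul _),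
              integral_const, integral_const_mul,
              integral_indicator_const _ (measurableSet_fl ψ A)]
            simp
    have h7 : k * (c1 / 4) ≤ k * ν.real (fl ψ ⁻¹' A) := by linarith
    exact le_of_mul_le_mul_left h7 hk0
  have hb : (K0:ℝ) ^ (-(c1 / 8)) * C5 < c1 / 4 := by
    have := K0_spec
    rwa [Real.rpow_neg hK0.le, ← div_eq_inv_mul]
  have h8 : η * C5 ^ k < c1 / 4 := by
    rw [hη, ← mul_pow]
    calc _ ≤ (K0:ℝ) ^ (-(c1 / 8)) * C5 :=
          pow_le_of_le_one (by positivity) (by linarith) (by omega)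
      _ < _ := hb
  linarith

/-- The constant of `star`: the first term accounts for the coordinates with
`∫ |T_i| dν = O(∫ |T_i| dμ)`, the second one for the others. -/
noncomputable def C0 : ℝ := 16 * Lam K0 + 8 * Real.exp 1 / eps0 / (c1 / 8)

lemma C0_pos : 0 < C0 := by
  have := c1_pos
  have := eps0_pos
  have := Lam_pos K0_ge
  unfold C0; positivity

/-- Strong `ℓ_r` control of the first moments survives a change of density of size `e^q`. -/
lemma star {F : Type*} [NormedAddCommGroup F] [NormedSpace ℝ F] [FiniteDimensional ℝ F]
    [MeasurableSpace F] [BorelSpace F] {μ ν : Measure F} [IsProbabilityMeasure μ]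
    [IsProbabilityMeasure ν] (hμ : LCM μ) (hν : LCM ν) {q B r : ℝ} (hq : 1 ≤ q) (hB : 0 < B)
    (hr : 1 ≤ r) (hνμ : ν ≤ ENNReal.ofReal (Real.exp q) • μ)
    (h1 : ∀ φ : F →L[ℝ] ℝ, ‖φ‖ ≤ 1 → ∫ x, |φ x| ^ q ∂μ ≤ B ^ q)
    (T : ℕ → F →L[ℝ] ℝ) (h2 : ∀ s : Finset ℕ, ∑ i ∈ s, (∫ x, |T i x| ∂μ) ^ r ≤ B ^ r)
    (h3 : ∀ x, ∀ s : Finset ℕ, ∑ i ∈ s, |T i x| ^ r ≤ ‖x‖ ^ r) (s : Finset ℕ) :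
    ∑ i ∈ s, (∫ x, |T i x| ∂ν) ^ r ≤ (C0 * B) ^ r := by
  have hc1 := c1_pos
  have he0 := eps0_pos
  have hL := Lam_pos K0_ge
  have hr0 : 0 < r := by linarith
  have hbn : ∀ i, 0 ≤ ∫ x, |T i x| ∂ν := fun i => integral_nonneg fun x => abs_nonneg _
  have hdn : ∀ i, 0 ≤ ∫ x, |T i x| ∂μ := fun i => integral_nonneg fun x => abs_nonneg _
  set P : ℕ → Prop := fun i => 0 < ∫ x, |T i x| ∂ν ∧
    ∫ x, |T i x| ∂μ ≤ 1 / (16 * Lam K0) * ∫ x, |T i x| ∂ν with hP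
  have h4 := no_large hμ hν hq hB hr hνμ h1 T h3 (s.filter P)
    (fun i hi => (Finset.mem_filter.1 hi).2.1) (fun i hi => (Finset.mem_filter.1 hi).2.2)
  have h5 : ∑ i ∈ s.filter (fun i => ¬ P i), (∫ x, |T i x| ∂ν) ^ r ≤ (16 * Lam K0 * B) ^ r := by
    calc _ ≤ ∑ i ∈ s.filter (fun i => ¬ P i), (16 * Lam K0) ^ r * (∫ x, |T i x| ∂μ) ^ r := by
          refine Finset.sum_le_sum fun i hi => ?_
          rw [← Real.mul_rpow (by positivity) (hdn i)]
          refine Real.rpow_le_rpow (hbn i) ?_ hr0.le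
          by_contra hcon
          rw [not_le] at hcon
          refine (Finset.mem_filter.1 hi).2 ⟨lt_of_le_of_lt (mul_nonneg (by positivity) (hdn i)) hcon, ?_⟩
          rw [one_div_mul_eq_div, le_div_iff₀ (by positivity)]
          linarith
      _ ≤ (16 * Lam K0) ^ r * B ^ r := by
          rw [← Finset.mul_sum]; gcongr; exact h2 _
      _ = _ := (Real.mul_rpow (by positivity) hB.le).symm
  rw [← Finset.sum_filter_add_sum_filter_not s P]
  calc _ ≤ (8 * Real.exp 1 / eps0 / (c1 / 8) * B) ^ r + (16 * Lam K0 * B) ^ r := add_le_add h4.le h5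
    _ ≤ (8 * Real.exp 1 / eps0 / (c1 / 8) * B + 16 * Lam K0 * B) ^ r :=
        Real.add_rpow_le_rpow_add (by positivity) (by positivity) hr
    _ = _ := by rw [C0]; congr 1; ring

/-! ### Extremal convex sets and the tail of the norm -/

/-- A convex set nearly maximizing `μ(E ∩ A) / √μ(A)`. Comparison with the whole space bounds
`μ(A)` from below, and comparison with `A ∩ H` shows that, conditionally on `A`, a half-space `H`
takes at most `2 √P(H)` of the mass of `E`. -/
lemma exists_extremal {F : Type*} [NormedAddCommGroup F] [NormedSpace ℝ F]
    [MeasurableSpace F] {μ : Measure F} [IsProbabilityMeasure μ]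
    {E : Set F} {p : ℝ} (hp : 1 ≤ p) (hE : Real.exp (-p) < μ.real E) :
    ∃ A : Set F, MeasurableSet A ∧ Convex ℝ A ∧ Real.exp (-(4 * p)) ≤ μ.real A ∧
      0 < μ.real (E ∩ A) ∧ ∀ A' : Set F, MeasurableSet A' → Convex ℝ A' →
        μ.real (E ∩ A') * √(μ.real A) ≤ 2 * μ.real (E ∩ A) * √(μ.real A') := by
  set V : Set ℝ := {v | ∃ A : Set F, MeasurableSet A ∧ Convex ℝ A ∧ 0 < μ.real A ∧
    v = μ.real (E ∩ A) / √(μ.real A)} with hV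
  have hle : ∀ A : Set F, 0 < μ.real A → μ.real (E ∩ A) / √(μ.real A) ≤ √(μ.real A) := by
    intro A hA
    rw [div_le_iff₀ (Real.sqrt_pos.2 hA), Real.mul_self_sqrt hA.le]
    exact measureReal_mono Set.inter_subset_right
  have hbd : BddAbove V := by
    refine ⟨1, ?_⟩
    rintro v ⟨A, -, -, hA, rfl⟩
    exact (hle A hA).trans (Real.sqrt_le_one.2 measureReal_le_one)
  have huniv : μ.real E ∈ V := ⟨Set.univ, MeasurableSet.univ, convex_univ, by simp, by simp⟩
  have hM : μ.real E ≤ sSup V := le_csSup hbd huniv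
  have hE0 : 0 < μ.real E := (Real.exp_pos _).trans hE
  obtain ⟨v, ⟨A, hAm, hAc, hA0, rfl⟩, hv⟩ :=
    exists_lt_of_lt_csSup ⟨_, huniv⟩ (show sSup V / 2 < sSup V by linarith)
  have hs0 := Real.sqrt_pos.2 hA0
  refine ⟨A, hAm, hAc, ?_, ?_, ?_⟩
  · have h1 : Real.exp (-p) / 2 ≤ √(μ.real A) := by
      have := hle A hA0
      linarith
    have h2 : Real.exp (-(2 * p)) ≤ Real.exp (-p) / 2 := by
      have h3 : Real.exp (-(2 * p)) = Real.exp (-p) * Real.exp (-p) := by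
        rw [← Real.exp_add]; ring_nf
      have h4 : Real.exp (-p) ≤ 1 / 2 := by
        rw [Real.exp_neg, ← one_div]
        have := Real.add_one_le_exp p
        gcongr; linarith
      rw [h3]
      nlinarith [Real.exp_pos (-p)]
    have h5 := h2.trans h1
    calc Real.exp (-(4 * p)) = Real.exp (-(2 * p)) * Real.exp (-(2 * p)) := by
          rw [← Real.exp_add]; ring_nf
      _ ≤ √(μ.real A) * √(μ.real A) := by gcongr
      _ = _ := Real.mul_self_sqrt hA0.le
  · by_contra hcon
    have : μ.real (E ∩ A) = 0 := le_antisymm (not_lt.1 hcon) measureReal_nonneg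
    rw [this, zero_div] at hv
    linarith
  · intro A' hA'm hA'c
    rcases (measureReal_nonneg (μ := μ) (s := A')).eq_or_lt with h0 | h0
    · have : μ.real (E ∩ A') ≤ μ.real A' := measureReal_mono Set.inter_subset_right
      have : μ.real (E ∩ A') = 0 := le_antisymm (by linarith) measureReal_nonneg
      rw [this, zero_mul]; positivity
    · have h6 : μ.real (E ∩ A') / √(μ.real A') ≤ sSup V := le_csSup hbd ⟨A', hA'm, hA'c, h0, rfl⟩
      have h7 : μ.real (E ∩ A') / √(μ.real A') ≤ 2 * (μ.real (E ∩ A) / √(μ.real A)) := by linarith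
      have hs' := Real.sqrt_pos.2 h0
      rw [div_le_iff₀ hs'] at h7
      calc _ ≤ 2 * (μ.real (E ∩ A) / √(μ.real A)) * √(μ.real A') * √(μ.real A) := by gcongr
        _ = _ := by field_simp

/-- Conditionally on `E` the `r`-th moment of `φ` is at most `(C r ∫ |φ| dν)^r`, since on `E` the
tail of `φ` is bounded by the square root of its unconditional tail, which is exponential. -/
lemma restricted_moment {F : Type*} [NormedAddCommGroup F] [NormedSpace ℝ F]
    [MeasurableSpace F] [BorelSpace F] {ν : Measure F} [IsProbabilityMeasure ν] (h : LCM ν)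
    {E : Set F} (φ : F →L[ℝ] ℝ)
    (hE : ∀ t : ℝ, ν.real (E ∩ {x | t ≤ |φ x|}) ≤ 4 * ν.real E * √(ν.real {x | t ≤ |φ x|}))
    {r : ℝ} (hr : 1 ≤ r) :
    ∫⁻ x in E, ENNReal.ofReal (|φ x| ^ r) ∂ν ≤
      ENNReal.ofReal (ν.real E * (80 * Real.exp 5 * r * ∫ x, |φ x| ∂ν) ^ r) := by
  have hr0 : 0 < r := by linarith
  have hN := semiLike_clm φ
  have hi : Integrable (fun x => |φ x|) ν := (h.integrable_clm φ).abs
  set b := ∫ x, |φ x| ∂ν with hb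
  have hb0 : 0 ≤ b := integral_nonneg fun x => abs_nonneg _
  rcases hb0.eq_or_lt with hb0 | hb0
  · have h1 : (fun x => |φ x|) =ᵐ[ν] 0 :=
      (integral_eq_zero_iff_of_nonneg (fun x => abs_nonneg _) hi).1 hb0.symm
    have h2 : ∫⁻ x in E, ENNReal.ofReal (|φ x| ^ r) ∂ν = 0 := by
      rw [lintegral_eq_zero_iff ((hN.meas.pow_const r).ennreal_ofReal)]
      filter_upwards [ae_restrict_of_ae h1] with x hx
      have hx' : |φ x| = 0 := hx
      simp [hx', Real.zero_rpow hr0.ne']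
    rw [h2]; exact zero_le
  set γ := ν.real E with hγ
  have hγ0 : 0 ≤ γ := measureReal_nonneg
  set t := Real.exp 4 * b with ht
  have ht0 : 0 < t := by positivity
  have hmark : ν.real {x | t ≤ |φ x|} ≤ Real.exp (-(4 * 1)) := by
    have h1 := mul_meas_ge_le_integral_of_nonneg (Filter.Eventually.of_forall fun x => abs_nonneg _)
      hi t
    rw [← hb, ht] at h1
    rw [mul_one, Real.exp_neg, ← one_div, le_div_iff₀ (Real.exp_pos _)]
    have h2 : b * (ν.real {x | t ≤ |φ x|} * Real.exp 4) ≤ b * 1 := by linarith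
    exact le_of_mul_le_mul_left h2 hb0
  have hme : ∀ u : ℝ, MeasurableSet {x | u ≤ |φ x|} := fun u =>
    measurableSet_le measurable_const hN.meas
  have htail : ∀ m : ℕ, (ν.restrict E).real {x | m * t ≤ |φ x|} ≤
      4 * γ * Real.exp (-(1 / 2 * m)) := by
    intro m
    rw [measureReal_restrict_apply (hme _), Set.inter_comm]
    refine (hE _).trans ?_
    gcongr
    have h3 : ν.real {x | m * t ≤ |φ x|} ≤ Real.exp (-(1 * m)) := by
      rcases Nat.eq_zero_or_pos m with rfl | hm
      · simp
      · exact borell_tail h hN le_rfl hmark (by exact_mod_cast hm)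
    calc _ ≤ √(Real.exp (-(1 * m))) := Real.sqrt_le_sqrt h3
      _ = _ := by rw [← Real.exp_half]; congr 1; ring
  refine (tail_to_moment hN.meas hN.nonneg ht0 le_rfl hr0 (by positivity) htail).trans ?_
  apply ENNReal.ofReal_le_ofReal
  have h5 : 20 * Real.exp 1 ≤ (20 * Real.exp 1) ^ r := by
    have h1 : (1:ℝ) ≤ Real.exp 1 := Real.one_le_exp (by norm_num)
    calc 20 * Real.exp 1 = (20 * Real.exp 1) ^ (1:ℝ) := (Real.rpow_one _).symm
      _ ≤ _ := Real.rpow_le_rpow_of_exponent_le (by linarith) hr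
  have h6 : Real.exp (1 / 2 / 2) ≤ Real.exp 1 := Real.exp_le_exp.2 (by norm_num)
  have h7 : (2 * r / (1 / 2)) = 4 * r := by ring
  rw [h7]
  calc 4 * γ * t ^ r * ((4 * r) ^ r * Real.exp (1 / 2 / 2) * 5) =
        γ * (t ^ r * ((4 * r) ^ r * (20 * Real.exp (1 / 2 / 2)))) := by ring
    _ ≤ γ * (t ^ r * ((4 * r) ^ r * (20 * Real.exp 1) ^ r)) := by
        gcongr
        linarith
    _ = γ * (t * (4 * r * (20 * Real.exp 1))) ^ r := by
        rw [Real.mul_rpow (x := t) (by positivity) (by positivity),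
          Real.mul_rpow (x := 4 * r) (by positivity) (by positivity)]
    _ = _ := by
        congr 2
        have : Real.exp 5 = Real.exp 4 * Real.exp 1 := by rw [← Real.exp_add]; norm_num
        rw [ht, this]; ring

/-- A tail bound for the norm under control of the moments of order `4p` of functionals. If
`E = {L ≤ ‖x‖}` had mass more than `e^{-p}`, summing `restricted_moment` over the coordinates and
using `star` for the conditional measure on the extremal set would give a mean of `‖x‖^r` on `E`
less than `L^r`. -/
lemma phase1 {F : Type*} [NormedAddCommGroup F] [NormedSpace ℝ F] [FiniteDimensional ℝ F]
    [MeasurableSpace F] [BorelSpace F] {μ : Measure F} [IsProbabilityMeasure μ]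
    (hμ : LCM μ) {p B r L : ℝ} (hp : 1 ≤ p) (hB : 0 < B) (hr : 1 ≤ r)
    (h1 : ∀ φ : F →L[ℝ] ℝ, ‖φ‖ ≤ 1 → ∫ x, |φ x| ^ (4 * p) ∂μ ≤ B ^ (4 * p))
    (T : ℕ → F →L[ℝ] ℝ) (h2 : ∀ s : Finset ℕ, ∑ i ∈ s, (∫ x, |T i x| ∂μ) ^ r ≤ B ^ r)
    (h3 : ∀ x, HasSum (fun i => |T i x| ^ r) (‖x‖ ^ r))
    (hL : 80 * Real.exp 5 * r * (C0 * B) < L) :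
    μ.real {x | L ≤ ‖x‖} ≤ Real.exp (-p) := by
  by_contra hcon
  rw [not_le] at hcon
  have hr0 : 0 < r := by linarith
  have hC0 := C0_pos
  have hL0 : 0 < L := lt_of_le_of_lt (by positivity) hL
  set E : Set F := {x | L ≤ ‖x‖} with hE
  have hEm : MeasurableSet E := measurableSet_le measurable_const continuous_norm.measurable
  obtain ⟨A, hAm, hAc, hA1, hA2, hA3⟩ := exists_extremal hp hcon
  have hA0 : 0 < μ.real A := (Real.exp_pos _).trans_le hA1
  have hA0' : μ A ≠ 0 := fun h0 => by simp [Measure.real, h0] at hA0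
  set ν : Measure F := (μ A)⁻¹ • μ.restrict A with hν
  have hprob : IsProbabilityMeasure ν := ⟨by
    rw [hν, Measure.smul_apply, Measure.restrict_apply_univ, smul_eq_mul,
      ENNReal.inv_mul_cancel hA0' (measure_ne_top μ A)]⟩
  have hνL : LCM ν := (hμ.restrict hAm hAc).smul _
  have hνr : ∀ S, MeasurableSet S → ν.real S = (μ.real A)⁻¹ * μ.real (S ∩ A) := by
    intro S hS
    rw [hν, measureReal_ennreal_smul_apply, measureReal_restrict_apply hS, ENNReal.toReal_inv]
    rfl
  have hνμ : ν ≤ ENNReal.ofReal (Real.exp (4 * p)) • μ := by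
    refine Measure.le_intro fun S hS _ => ?_
    rw [hν, Measure.smul_apply, Measure.smul_apply, smul_eq_mul, smul_eq_mul]
    refine mul_le_mul' ?_ (Measure.restrict_apply_le A S)
    rw [← ofReal_measureReal, ← ENNReal.ofReal_inv_of_pos hA0]
    apply ENNReal.ofReal_le_ofReal
    rw [← neg_neg (4 * p), Real.exp_neg]
    gcongr
  have hT3 : ∀ x, ∀ s : Finset ℕ, ∑ i ∈ s, |T i x| ^ r ≤ ‖x‖ ^ r := fun x s =>
    sum_le_hasSum s (fun i _ => by positivity) (h3 x)
  have hstar := star hμ hνL (by linarith) hB hr hνμ h1 T h2 hT3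
  set γ := ν.real E with hγ
  have hγ0 : 0 < γ := by
    rw [hγ, hνr E hEm]; positivity
  have hhalf : ∀ (φ : F →L[ℝ] ℝ) (t : ℝ),
      ν.real (E ∩ {x | t ≤ φ x}) ≤ 2 * γ * √(ν.real {x | t ≤ φ x}) := by
    intro φ t
    have hHm : MeasurableSet {x | t ≤ φ x} := measurableSet_le measurable_const φ.continuous.measurable
    have hHc : Convex ℝ {x | t ≤ φ x} := convex_halfSpace_ge φ.toLinearMap.isLinear t
    have h5 := hA3 (A ∩ {x | t ≤ φ x}) (hAm.inter hHm) (hAc.inter hHc)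
    rw [hγ, hνr _ (hEm.inter hHm), hνr _ hEm, hνr _ hHm, Real.sqrt_mul (by positivity),
      Real.sqrt_inv]
    have e1 : E ∩ {x | t ≤ φ x} ∩ A = E ∩ (A ∩ {x | t ≤ φ x}) := by
      rw [Set.inter_assoc, Set.inter_comm A]
    rw [e1, Set.inter_comm {x | t ≤ φ x} A]
    have hs := Real.sqrt_pos.2 hA0
    rw [← mul_le_mul_iff_left₀ hs]
    calc _ = (μ.real A)⁻¹ * (μ.real (E ∩ (A ∩ {x | t ≤ φ x})) * √(μ.real A)) := by ring
      _ ≤ (μ.real A)⁻¹ * (2 * μ.real (E ∩ A) * √(μ.real (A ∩ {x | t ≤ φ x}))) := by gcongr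
      _ = _ := by field_simp
  have habs : ∀ (φ : F →L[ℝ] ℝ) (t : ℝ),
      ν.real (E ∩ {x | t ≤ |φ x|}) ≤ 4 * γ * √(ν.real {x | t ≤ |φ x|}) := by
    intro φ t
    have e : E ∩ {x | t ≤ |φ x|} = (E ∩ {x | t ≤ φ x}) ∪ (E ∩ {x | t ≤ (-φ) x}) := by
      ext x; simp [le_abs, and_or_left]
    have h6 : ν.real {x | t ≤ φ x} ≤ ν.real {x | t ≤ |φ x|} :=
      measureReal_mono fun x hx => le_trans (show t ≤ φ x from hx) (le_abs_self _)
    have h7 : ν.real {x | t ≤ (-φ) x} ≤ ν.real {x | t ≤ |φ x|} :=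
      measureReal_mono fun x hx => le_trans (show t ≤ -(φ x) from hx) (neg_le_abs _)
    rw [e]
    calc _ ≤ ν.real (E ∩ {x | t ≤ φ x}) + ν.real (E ∩ {x | t ≤ (-φ) x}) := measureReal_union_le _ _
      _ ≤ 2 * γ * √(ν.real {x | t ≤ |φ x|}) + 2 * γ * √(ν.real {x | t ≤ |φ x|}) :=
          add_le_add ((hhalf φ t).trans (by gcongr)) ((hhalf (-φ) t).trans (by gcongr))
      _ = _ := by ring
  have hbn : ∀ i, 0 ≤ ∫ x, |T i x| ∂ν := fun i => integral_nonneg fun x => abs_nonneg _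
  have hsum : ∑' i, ENNReal.ofReal ((∫ x, |T i x| ∂ν) ^ r) ≤ ENNReal.ofReal ((C0 * B) ^ r) := by
    rw [ENNReal.tsum_eq_iSup_sum]
    refine iSup_le fun s => ?_
    rw [← ENNReal.ofReal_sum_of_nonneg fun i _ => Real.rpow_nonneg (hbn i) _]
    exact ENNReal.ofReal_le_ofReal (hstar s)
  have hup : ∫⁻ x in E, ENNReal.ofReal (‖x‖ ^ r) ∂ν ≤
      ENNReal.ofReal (γ * (80 * Real.exp 5 * r * (C0 * B)) ^ r) := by
    calc _ = ∫⁻ x in E, ∑' i, ENNReal.ofReal (|T i x| ^ r) ∂ν := by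
          congr 1; ext x
          rw [← ENNReal.ofReal_tsum_of_nonneg (fun i => by positivity) (h3 x).summable,
            (h3 x).tsum_eq]
      _ = ∑' i, ∫⁻ x in E, ENNReal.ofReal (|T i x| ^ r) ∂ν :=
          lintegral_tsum fun i =>
            (((T i).continuous.measurable.abs.pow_const r).ennreal_ofReal).aemeasurable
      _ ≤ ∑' i, ENNReal.ofReal (γ * (80 * Real.exp 5 * r) ^ r) *
            ENNReal.ofReal ((∫ x, |T i x| ∂ν) ^ r) := by
          refine ENNReal.tsum_le_tsum fun i => ?_
          refine (restricted_moment hνL (T i) (habs (T i)) hr).trans (le_of_eq ?_)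
          rw [← ENNReal.ofReal_mul (by positivity), Real.mul_rpow (by positivity) (hbn i)]
          congr 1; ring
      _ ≤ ENNReal.ofReal (γ * (80 * Real.exp 5 * r) ^ r) * ENNReal.ofReal ((C0 * B) ^ r) := by
          rw [ENNReal.tsum_mul_left]; gcongr
      _ = _ := by
          rw [← ENNReal.ofReal_mul (by positivity),
            Real.mul_rpow (x := 80 * Real.exp 5 * r) (by positivity) (by positivity), mul_assoc]
  have hlow : ENNReal.ofReal (γ * L ^ r) ≤ ∫⁻ x in E, ENNReal.ofReal (‖x‖ ^ r) ∂ν := by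
    calc ENNReal.ofReal (γ * L ^ r) = ∫⁻ _ in E, ENNReal.ofReal (L ^ r) ∂ν := by
          rw [setLIntegral_const, mul_comm γ, ENNReal.ofReal_mul (by positivity), hγ,
            ofReal_measureReal]
      _ ≤ _ := setLIntegral_mono' hEm fun x hx =>
          ENNReal.ofReal_le_ofReal (Real.rpow_le_rpow hL0.le hx hr0.le)
  have hfin := hlow.trans hup
  rw [ENNReal.ofReal_le_ofReal_iff (by positivity)] at hfin
  have h8 := le_of_mul_le_mul_left hfin hγ0
  exact absurd h8 (not_le.2 (Real.rpow_lt_rpow (by positivity) hL hr0))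

/-! ### From tails to moments -/

/-- Minkowski's integral inequality in `ℓ_r`, applied to the vector `(|T i x|)_{i ∈ s}`. -/
lemma minkowski_first {F : Type*} [NormedAddCommGroup F] [NormedSpace ℝ F] [FiniteDimensional ℝ F]
    [MeasurableSpace F] [BorelSpace F] {μ : Measure F} [IsProbabilityMeasure μ] {r : ℝ}
    (hr : 1 ≤ r) (T : ℕ → F →L[ℝ] ℝ)
    (h3 : ∀ x, HasSum (fun i => |T i x| ^ r) (‖x‖ ^ r))
    (hint : Integrable (fun x : F => ‖x‖) μ) (s : Finset ℕ) :
    ∑ i ∈ s, (∫ x, |T i x| ∂μ) ^ r ≤ (∫ x, ‖x‖ ∂μ) ^ r := by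
  have hr0 : 0 < r := by linarith
  set q : ℝ≥0∞ := ENNReal.ofReal r
  have hq : q.toReal = r := ENNReal.toReal_ofReal hr0.le
  have : Fact (1 ≤ q) := ⟨by
    rw [← ENNReal.ofReal_one]; exact ENNReal.ofReal_le_ofReal hr⟩
  let G : F → PiLp q (fun _ : s => ℝ) := fun x => WithLp.toLp q (fun i => |T i x|)
  have hG : Continuous G := by
    refine (PiLp.continuous_toLp q _).comp ?_
    fun_prop
  have hn : ∀ x, ‖G x‖ ≤ ‖x‖ := by
    intro x
    rw [PiLp.norm_eq_sum (by rw [hq]; exact hr0), hq]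
    have h : ∑ i : s, ‖G x i‖ ^ r ≤ ‖x‖ ^ r := by
      have h1 : ∑ i : s, ‖G x i‖ ^ r = ∑ i ∈ s, |T i x| ^ r := by
        rw [← Finset.sum_coe_sort s]
        refine Finset.sum_congr rfl fun i _ => ?_
        simp [G]
      rw [h1]
      exact sum_le_hasSum s (fun i _ => by positivity) (h3 x)
    calc _ ≤ (‖x‖ ^ r) ^ (1 / r) := by gcongr
      _ = ‖x‖ := by rw [one_div, Real.rpow_rpow_inv (norm_nonneg x) hr0.ne']
  have hGi : Integrable G μ :=
    hint.mono hG.aestronglyMeasurable (Filter.Eventually.of_forall fun x => by simpa using hn x)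
  have h4 : ∀ i : s, (∫ x, G x ∂μ) i = ∫ x, |T i x| ∂μ := fun i => by
    have := (PiLp.proj (𝕜 := ℝ) q (fun _ : s => ℝ) i).integral_comp_comm hGi
    exact this.symm
  have h5 : ‖∫ x, G x ∂μ‖ ≤ ∫ x, ‖x‖ ∂μ :=
    (norm_integral_le_integral_norm _).trans (integral_mono hGi.norm hint hn)
  calc ∑ i ∈ s, (∫ x, |T i x| ∂μ) ^ r = ∑ i : s, ‖(∫ x, G x ∂μ) i‖ ^ r := by
        rw [← Finset.sum_coe_sort s]
        refine Finset.sum_congr rfl fun i _ => ?_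
        rw [h4, Real.norm_of_nonneg (integral_nonneg fun x => abs_nonneg _)]
    _ = ‖∫ x, G x ∂μ‖ ^ r := by
        rw [PiLp.norm_eq_sum (by rw [hq]; exact hr0), hq, one_div, Real.rpow_inv_rpow _ hr0.ne']
        exact Finset.sum_nonneg fun i _ => by positivity
    _ ≤ _ := by gcongr

/-- The constant of the final inequality: `10 e` times twice `80 e⁵ C0` times `160 e⁵`. -/
noncomputable def CF : ℝ :=
  10 * Real.exp 1 * (2 * (80 * Real.exp 5 * C0)) * (160 * Real.exp 5)

lemma CF_pos : 0 < CF := by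
  have := C0_pos
  unfold CF; positivity

/-- The main inequality, for a positive upper bound `A` of both the mean norm and the weak
`p`-th moments. -/
lemma moment_le {F : Type*} [NormedAddCommGroup F] [NormedSpace ℝ F] [FiniteDimensional ℝ F]
    [MeasurableSpace F] [BorelSpace F] {μ : Measure F} [IsProbabilityMeasure μ] (hμ : LCM μ)
    {r p A : ℝ} (hr : 1 ≤ r) (hp : 1 ≤ p) (hA : 0 < A) (T : ℕ → F →L[ℝ] ℝ)
    (h3 : ∀ x, HasSum (fun i => |T i x| ^ r) (‖x‖ ^ r))
    (hA1 : ∫ x, ‖x‖ ∂μ ≤ A)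
    (hA2 : ∀ φ : F →L[ℝ] ℝ, ‖φ‖ ≤ 1 → ∫ x, |φ x| ^ p ∂μ ≤ A ^ p) :
    (∫ x, ‖x‖ ^ p ∂μ) ^ (1 / p) ≤ CF * r * A := by
  have hp0 : 0 < p := by linarith
  have hC0 := C0_pos
  set B : ℝ := 160 * Real.exp 5 * A with hB
  have hB0 : 0 < B := by positivity
  have he5 : 1 ≤ Real.exp 5 := Real.one_le_exp (by norm_num)
  have hAB : A ≤ B := by rw [hB]; nlinarith
  have h1 : ∀ φ : F →L[ℝ] ℝ, ‖φ‖ ≤ 1 →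
      ∫ x, |φ x| ^ (4 * (4 * p)) ∂μ ≤ B ^ (4 * (4 * p)) := by
    intro φ hφ
    have := hμ.moment_clm φ hp (by linarith : p ≤ 4 * (4 * p)) hA (hA2 φ hφ)
    have e : 10 * Real.exp 5 * (4 * (4 * p) / p) * A = B := by
      rw [hB]; field_simp; ring
    rwa [e] at this
  have hint1 : Integrable (fun x : F => ‖x‖) μ := by
    simpa using hμ.integrable_norm_rpow (le_refl (1:ℝ))
  have h2 : ∀ s : Finset ℕ, ∑ i ∈ s, (∫ x, |T i x| ∂μ) ^ r ≤ B ^ r := fun s =>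
    (minkowski_first hr T h3 hint1 s).trans
      (Real.rpow_le_rpow (integral_nonneg fun x => norm_nonneg x) (hA1.trans hAB) (by linarith))
  set t : ℝ := 2 * (80 * Real.exp 5 * r * (C0 * B)) with ht
  have ht0 : 0 < t := by positivity
  have hL : 80 * Real.exp 5 * r * (C0 * B) < t := by
    have : 0 < 80 * Real.exp 5 * r * (C0 * B) := by positivity
    linarith
  -- Borell's lemma asks for a tail `e^{-4p}`, hence weak moments of order `16 p`
  have hP := phase1 hμ (by linarith : 1 ≤ 4 * p) hB0 hr h1 T h2 h3 hL
  have hτ : ∀ m : ℕ, μ.real {x : F | m * t ≤ ‖x‖} ≤ 1 * Real.exp (-(p * m)) := by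
    intro m
    rw [one_mul]
    rcases Nat.eq_zero_or_pos m with rfl | hm
    · simp
    · exact borell_tail hμ semiLike_norm hp hP (by exact_mod_cast hm)
  have hM := tail_to_moment (N := fun x : F => ‖x‖) (ν := μ) measurable_norm
    (fun x => norm_nonneg x) ht0 (by linarith : 1 / 2 ≤ p) hp0 zero_le_one hτ
  have hI : ∫ x, ‖x‖ ^ p ∂μ ≤ (10 * Real.exp 1 * t) ^ p := by
    have hint := hμ.integrable_norm_rpow hp
    rw [← ofReal_integral_eq_lintegral_ofReal hint
      (Filter.Eventually.of_forall fun x => by positivity)] at hM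
    have hM' := (ENNReal.ofReal_le_ofReal_iff (by positivity)).1 hM
    refine hM'.trans ?_
    have e2 : 2 * p / p = 2 := by field_simp
    have e3 : (5:ℝ) ≤ 5 ^ p := Real.self_le_rpow_of_one_le (by norm_num) hp
    have e4 : Real.exp (p / 2) ≤ Real.exp 1 ^ p := by
      rw [← Real.exp_mul]; exact Real.exp_le_exp.2 (by linarith)
    calc 1 * t ^ p * ((2 * p / p) ^ p * Real.exp (p / 2) * 5)
        ≤ 1 * t ^ p * (2 ^ p * Real.exp 1 ^ p * 5 ^ p) := by rw [e2]; gcongr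
      _ = (10 * Real.exp 1 * t) ^ p := by
        rw [one_mul, ← Real.mul_rpow, ← Real.mul_rpow, ← Real.mul_rpow]
        · congr 1; ring
        all_goals positivity
  calc (∫ x, ‖x‖ ^ p ∂μ) ^ (1 / p) ≤ ((10 * Real.exp 1 * t) ^ p) ^ (1 / p) := by
        gcongr
    _ = 10 * Real.exp 1 * t := by rw [one_div, Real.rpow_rpow_inv (by positivity) hp0.ne']
    _ = CF * r * A := by rw [ht, hB, CF]; ring

end LrMoments

/-- **Theorem 1.2.** There is a universal constant `C` such that for every `r ∈ [1,∞)`, every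
finite-dimensional normed space `F` embedding isometrically into `ℓ_r`, every log-concave
random vector `X` in `F` and every `p ≥ 1`:
`(E‖X‖^p)^{1/p} ≤ C r (E‖X‖ + sup_{‖φ‖_* ≤ 1} (E|φ(X)|^p)^{1/p})`. -/
theorem moment_bound_subspace_lr :
    ∃ C : ℝ, 0 < C ∧
      ∀ (r : ℝ), 1 ≤ r → ∀ [Fact (1 ≤ ENNReal.ofReal r)],
      ∀ (F : Type) [NormedAddCommGroup F] [NormedSpace ℝ F] [MeasurableSpace F]
        [BorelSpace F], FiniteDimensional ℝ F →
      Nonempty (F →ₗᵢ[ℝ] lp (fun _ : ℕ => ℝ) (ENNReal.ofReal r)) →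
      ∀ (Ω : Type) [MeasureSpace Ω], IsProbabilityMeasure (ℙ : Measure Ω) →
      ∀ X : Ω → F, Measurable X → IsLogConcave (Measure.map X ℙ) →
      ∀ p : ℝ, 1 ≤ p →
        (∫ ω, ‖X ω‖ ^ p) ^ (1 / p) ≤
          C * r * ((∫ ω, ‖X ω‖) +
            ⨆ φ : {φ : F →L[ℝ] ℝ // ‖φ‖ ≤ 1},
              (∫ ω, |φ.1 (X ω)| ^ p) ^ (1 / p)) := by
  refine ⟨LrMoments.CF, LrMoments.CF_pos, ?_⟩
  intro r hr _ F _ _ _ _ hF ⟨J⟩ Ω _ hΩ X hX hlc p hp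
  have hr0 : 0 < r := by linarith
  have hp0 : 0 < p := by linarith
  set μ : Measure F := Measure.map X ℙ with hμdef
  have : IsProbabilityMeasure μ := Measure.isProbabilityMeasure_map hX.aemeasurable
  have hμ := LrMoments.lcm_of_isLogConcave μ hlc
  have tr : ∀ f : F → ℝ, Continuous f → ∫ ω, f (X ω) = ∫ x, f x ∂μ := fun f hf =>
    (integral_map hX.aemeasurable hf.aestronglyMeasurable).symm
  rw [tr (fun x => ‖x‖ ^ p) (continuous_norm.rpow_const fun _ => Or.inr hp0.le),
    tr (fun x => ‖x‖) continuous_norm]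
  have trφ : ∀ φ : {φ : F →L[ℝ] ℝ // ‖φ‖ ≤ 1},
      ∫ ω, |φ.1 (X ω)| ^ p = ∫ x, |φ.1 x| ^ p ∂μ := fun φ =>
    tr (fun x => |φ.1 x| ^ p) (φ.1.continuous.abs.rpow_const fun _ => Or.inr hp0.le)
  simp_rw [trφ]
  set σ : ℝ := ⨆ φ : {φ : F →L[ℝ] ℝ // ‖φ‖ ≤ 1}, (∫ x, |φ.1 x| ^ p ∂μ) ^ (1 / p) with hσ
  have hbdd : BddAbove (Set.range fun φ : {φ : F →L[ℝ] ℝ // ‖φ‖ ≤ 1} =>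
      (∫ x, |φ.1 x| ^ p ∂μ) ^ (1 / p)) := by
    refine ⟨(∫ x, ‖x‖ ^ p ∂μ) ^ (1 / p), ?_⟩
    rintro _ ⟨φ, rfl⟩
    have h0 : 0 ≤ ∫ x, |φ.1 x| ^ p ∂μ := integral_nonneg fun x => by positivity
    refine Real.rpow_le_rpow h0 ?_ (by positivity)
    refine integral_mono (hμ.integrable_clm_rpow φ.1 hp) (hμ.integrable_norm_rpow hp) fun x => ?_
    refine Real.rpow_le_rpow (abs_nonneg _) ?_ hp0.le
    simpa using φ.1.le_of_opNorm_le φ.2 x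
  have hσ0 : 0 ≤ σ := Real.iSup_nonneg fun φ => by
    have h0 : 0 ≤ ∫ x, |φ.1 x| ^ p ∂μ := integral_nonneg fun x => by positivity
    positivity
  have hE0 : 0 ≤ ∫ x, ‖x‖ ∂μ := integral_nonneg fun x => norm_nonneg x
  -- the coordinate functionals of the embedding
  let T : ℕ → F →L[ℝ] ℝ := fun i =>
    (lp.evalCLM ℝ (fun _ : ℕ => ℝ) (ENNReal.ofReal r) i).comp J.toContinuousLinearMap
  have h3 : ∀ x, HasSum (fun i => |T i x| ^ r) (‖x‖ ^ r) := by
    intro x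
    have hq : (ENNReal.ofReal r).toReal = r := ENNReal.toReal_ofReal hr0.le
    have h := lp.hasSum_norm (by rw [hq]; exact hr0) (J x)
    rw [hq, J.norm_map] at h
    exact h
  -- the bound `A` has to be positive, which costs an arbitrarily small `ε`
  have key : ∀ ε : ℝ, 0 < ε →
      (∫ x, ‖x‖ ^ p ∂μ) ^ (1 / p) ≤ LrMoments.CF * r * ((∫ x, ‖x‖ ∂μ) + σ + ε) := by
    intro ε hε
    refine LrMoments.moment_le hμ hr hp (by linarith) T h3 (by linarith) fun φ hφ => ?_
    have h0 : 0 ≤ ∫ x, |φ x| ^ p ∂μ := integral_nonneg fun x => by positivity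
    have h4 : (∫ x, |φ x| ^ p ∂μ) ^ (1 / p) ≤ σ := le_ciSup hbdd ⟨φ, hφ⟩
    calc ∫ x, |φ x| ^ p ∂μ = ((∫ x, |φ x| ^ p ∂μ) ^ (1 / p)) ^ p := by
          rw [one_div, Real.rpow_inv_rpow h0 hp0.ne']
      _ ≤ _ := Real.rpow_le_rpow (by positivity) (by linarith) hp0.le
  have hc : 0 < LrMoments.CF * r := mul_pos LrMoments.CF_pos hr0
  refine le_of_forall_pos_le_add fun δ hδ => ?_
  refine (key (δ / (LrMoments.CF * r)) (by positivity)).trans (le_of_eq ?_)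
  rw [mul_add, mul_div_cancel₀ _ hc.ne']
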